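/- arXiv:math/0311271 — 2 statements merged into one kernel-verified Lean document; each statement's English description precedes it below -/
import Mathlib

section
/- For all integers k ≥ 0 and n with 2k+3 ≤ n ≤ 3k+4, the reduced simplicial homology group H̃_k(Δ_n; ℤ) is nonzero. -/
/-- The chain `L` of subsets of `{1,…,n}` (encoded as `Finset (Fin n)`) with the
sentinels `S₀ = ∅` and `S_{j+1} = univ` adjoined. -/
def withSent (n : ℕ) (L : List (Finset (Fin n))) : List (Finset (Fin n)) :=
  (∅ :: L) ++ [Finset.univ]

/-- `L` is a face of the h-complex `Δₙ` of the truncated Boolean algebra: a strictly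
increasing chain of proper nonempty subsets such that, with sentinels adjoined,
every consecutive pair of blocks has `max (S_i \ S_{i-1}) > min (S_{i+1} \ S_i)`
(expressed as: some element of the lower difference exceeds some element of the
upper difference, which is equivalent since max ≥ a and min ≤ c). -/
def IsFace (n : ℕ) (L : List (Finset (Fin n))) : Prop :=
  (withSent n L).Chain' (· ⊂ ·) ∧
  ∀ i, ∀ h : i + 2 < (withSent n L).length,
    ∃ a ∈ (withSent n L).get ⟨i + 1, by omega⟩ \ (withSent n L).get ⟨i, by omega⟩,
      ∃ c ∈ (withSent n L).get ⟨i + 2, h⟩ \ (withSent n L).get ⟨i + 1, by omega⟩, c < a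

/-- The faces of `Δₙ` consisting of exactly `k` subsets (dimension `k - 1`;
`k = 0` gives the unique empty face, present for `n ≥ 1`). -/
def HFace (n k : ℕ) : Type := {L : List (Finset (Fin n)) // IsFace n L ∧ L.length = k}

open scoped Classical in
/-- The simplicial boundary of a face with `k+1` members: the alternating sum of
the faces obtained by deleting one member (deleting a member of a face of `Δₙ`
always yields a face, so the `dite` fallback is never used). -/
noncomputable def bdryElem (n k : ℕ) (L : HFace n (k + 1)) : HFace n k →₀ ℤ :=
  ∑ i : Fin (k + 1),
    if h : IsFace n (L.1.eraseIdx i) ∧ (L.1.eraseIdx i).length = k then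
      Finsupp.single (⟨L.1.eraseIdx i, h⟩ : HFace n k) ((-1 : ℤ) ^ (i : ℕ))
    else 0

/-- The boundary map of the augmented (reduced) simplicial chain complex of
`Δₙ` over `ℤ`, from chains on faces with `k+1` members to chains on faces with
`k` members. -/
noncomputable def bdry (n k : ℕ) : (HFace n (k + 1) →₀ ℤ) →ₗ[ℤ] (HFace n k →₀ ℤ) :=
  Finsupp.lsum ℤ fun L => LinearMap.toSpanSingleton ℤ _ (bdryElem n k L)

/-- The reduced simplicial homology `H̃ᵢ(Δₙ; ℤ)`: cycles on `i`-dimensional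
faces (those with `i+1` members) modulo boundaries from `(i+1)`-dimensional
faces. -/
noncomputable def ReducedHomology (n i : ℕ) :=
  LinearMap.ker (bdry n i) ⧸
    Submodule.comap (LinearMap.ker (bdry n i)).subtype (LinearMap.range (bdry n (i + 1)))

/-!
For `J = 3k + 4 - n`, which ranges over `0, …, k + 1`, there are `k + 1` pairs of vertices of `Δₙ`
such that choosing one vertex from each pair always gives a face. These faces form a
`k`-dimensional cross-polytope, so their signed sum is a cycle. One of them cannot be refined to
a longer face, so its coefficient vanishes in every boundary; in the cycle it is `1`, so the cycle
is not a boundary.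

The `i`-th block of that facet lies in `{valley i, peak i, peak (i + 1) - 1}`. All elements of the
previous block are at most `peak i`; all elements of the next block are at least `peak i`, unless
`peak i` is the maximum of its own block. So in a split of the block with descents on both sides the
element below `peak i` would go to the first part and the one above it to the second, which leaves
no descent between the two parts.
-/

section Levels

variable {α : Type*}

/-- `P` immediately followed by `Q` satisfies the descent condition `max P > min Q` of `Δₙ`, in
the maximum-free form used by `IsFace`. -/
def Descends [LT α] (P Q : Finset α) : Prop :=
  ∃ a ∈ P, ∃ c ∈ Q, c < a

/-- The block `S_{i+1} ∖ S_i` of a sequence of levels `S`; blocks are numbered from `0`. -/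
def block [DecidableEq α] (S : ℕ → Finset α) (i : ℕ) : Finset α :=
  S (i + 1) \ S i

/-- The list of inner levels `S_1, …, S_k` of a sequence, leaving out the ends `S_0` and
`S_{k+1}`, which play the role of the sentinels. -/
def flag (k : ℕ) (S : ℕ → Finset α) : List (Finset α) :=
  (List.range' 1 k).map S

/-- A pivot of the `j`-th of the blocks `0, …, k` of `S`: an element `b` whose existence prevents
the block from being split in two with all descents kept. -/
structure IsPivot [LinearOrder α] (S : ℕ → Finset α) (k j : ℕ) (b : α) : Prop where
  below : {x | x ∈ block S j ∧ x < b}.Subsingleton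
  above : {x | x ∈ block S j ∧ b < x}.Subsingleton
  prev : (∀ x ∈ block S j, b ≤ x) ∨ (j ≠ 0 ∧ ∀ y ∈ block S (j - 1), y ≤ b)
  next : (∀ x ∈ block S j, x ≤ b) ∨ (j < k ∧ ∀ y ∈ block S (j + 1), b ≤ y)

@[simp]
theorem length_flag (k : ℕ) (S : ℕ → Finset α) : (flag k S).length = k := by
  simp [flag]

theorem flag_eq_flag_iff {k : ℕ} {S T : ℕ → Finset α} :
    flag k S = flag k T ↔ ∀ i ∈ Finset.Icc 1 k, S i = T i := by
  simp only [flag, List.map_inj_left, List.mem_range'_1, Finset.mem_Icc, Nat.lt_one_add_iff]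

theorem eraseIdx_flag {k j : ℕ} (hj : j ≤ k) (S : ℕ → Finset α) :
    (flag (k + 1) S).eraseIdx j = flag k fun i => if i ≤ j then S i else S (i + 1) := by
  refine List.ext_getElem (by simp [List.length_eraseIdx, Nat.lt_succ_of_le hj]) fun t _ _ => ?_
  simp only [flag, List.getElem_eraseIdx, List.getElem_map, List.getElem_range']
  split_ifs <;> grind

theorem not_descends_of_pivot [LinearOrder α] {P Q : Finset α} {b : α} (hPQ : Disjoint P Q)
    (hbelow : {x | x ∈ P ∪ Q ∧ x < b}.Subsingleton)
    (habove : {x | x ∈ P ∪ Q ∧ b < x}.Subsingleton)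
    (hP : (∀ y ∈ Q, b ≤ y) ∨ ∃ x ∈ P, x < b) (hQ : (∀ x ∈ P, x ≤ b) ∨ ∃ y ∈ Q, b < y) :
    ¬ Descends P Q := by
  have hQ_ge : ∀ y ∈ Q, b ≤ y := by
    rcases hP with hP | ⟨x, hx, hxb⟩
    · exact hP
    · refine fun y hy => le_of_not_gt fun hyb => Finset.disjoint_left.1 hPQ hx ?_
      rwa [hbelow ⟨Finset.mem_union_left _ hx, hxb⟩ ⟨Finset.mem_union_right _ hy, hyb⟩]
  have hP_le : ∀ x ∈ P, x ≤ b := by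
    rcases hQ with hQ | ⟨y, hy, hby⟩
    · exact hQ
    · refine fun x hx => le_of_not_gt fun hbx => Finset.disjoint_left.1 hPQ hx ?_
      rwa [habove ⟨Finset.mem_union_left _ hx, hbx⟩ ⟨Finset.mem_union_right _ hy, hby⟩]
  rintro ⟨a, ha, c, hc, hca⟩
  exact (hca.trans_le (hP_le a ha)).not_ge (hQ_ge c hc)

theorem IsPivot.not_forall_descends_of_insert [LinearOrder α] {S T : ℕ → Finset α} {k j : ℕ}
    {b : α} (hb : IsPivot S k j b) (hj : j ≤ k) (hlow : ∀ i ≤ j, T i = S i)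
    (hhigh : ∀ i, j < i → i ≤ k + 1 → T (i + 1) = S i)
    (hlower : T j ⊆ T (j + 1)) (hupper : T (j + 1) ⊆ T (j + 2)) :
    ¬ ∀ i ≤ k, Descends (block T i) (block T (i + 1)) := by
  intro hdesc
  have hunion : block T j ∪ block T (j + 1) = block S j := by
    unfold block
    rw [Finset.union_comm, Finset.sdiff_union_sdiff_cancel hupper hlower, hlow j le_rfl,
      hhigh (j + 1) (by omega) (by omega)]
  have hdisj : Disjoint (block T j) (block T (j + 1)) :=
    Finset.disjoint_sdiff.mono_left Finset.sdiff_subset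
  refine not_descends_of_pivot (b := b) hdisj (hunion ▸ hb.below) (hunion ▸ hb.above) ?_ ?_
    (hdesc j hj)
  · refine hb.prev.imp (fun h y hy => h y (hunion ▸ Finset.mem_union_right _ hy)) ?_
    rintro ⟨hj0, hprev⟩
    obtain ⟨a, ha, c, hc, hca⟩ := hdesc (j - 1) (by omega)
    rw [Nat.sub_add_cancel (by omega)] at hc
    rw [block, hlow _ (by omega), hlow _ (by omega)] at ha
    exact ⟨c, hc, hca.trans_le (hprev a ha)⟩
  · refine hb.next.imp (fun h x hx => h x (hunion ▸ Finset.mem_union_left _ hx)) ?_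
    rintro ⟨hjk, hnext⟩
    obtain ⟨a, ha, c, hc, hca⟩ := hdesc (j + 1) hjk
    rw [block, hhigh _ (by omega) (by omega), hhigh _ (by omega) (by omega)] at hc
    exact ⟨a, ha, (hnext c hc).trans_lt hca⟩

end Levels

section Faces

variable {n k : ℕ}

theorem withSent_flag {S : ℕ → Finset (Fin n)} (hbot : S 0 = ∅) (htop : S (k + 1) = Finset.univ) :
    withSent n (flag k S) = (List.range (k + 2)).map S := by
  rw [List.range_succ, List.range_eq_range', List.range'_succ]
  simp [withSent, flag, hbot, htop]

theorem isFace_flag_iff {S : ℕ → Finset (Fin n)} (hbot : S 0 = ∅)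
    (htop : S (k + 1) = Finset.univ) :
    IsFace n (flag k S) ↔
      (∀ i ≤ k, S i ⊂ S (i + 1)) ∧ ∀ i < k, Descends (block S i) (block S (i + 1)) := by
  refine and_congr ?_ ?_
  · rw [withSent_flag hbot htop]
    refine List.isChain_iff_getElem.trans ?_
    simp
  · simp [withSent_flag hbot htop, Descends, block]

theorem exists_eq_flag (L : List (Finset (Fin n))) :
    ∃ S : ℕ → Finset (Fin n), S 0 = ∅ ∧ S (L.length + 1) = Finset.univ ∧ flag L.length S = L := by
  refine ⟨fun i => (withSent n L).getD i ∅, by simp [withSent], by simp [withSent], ?_⟩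
  refine List.ext_getElem (by simp) fun i _ hi => ?_
  simp [flag, withSent, Nat.add_comm 1, List.getElem?_append_left hi, hi]

/-- A facet of `Δₙ`. As the faces of `Δₙ` are closed under deleting members, maximality is
expressed by deletion of a single member. -/
def IsFacet (n : ℕ) (F : List (Finset (Fin n))) : Prop :=
  IsFace n F ∧ ∀ L, IsFace n L → ∀ j < L.length, L.eraseIdx j ≠ F

theorem isFacet_flag_of_isPivot {S : ℕ → Finset (Fin n)} (hbot : S 0 = ∅)
    (htop : S (k + 1) = Finset.univ) (hS : IsFace n (flag k S))
    (hpivot : ∀ j ≤ k, ∃ b, IsPivot S k j b) : IsFacet n (flag k S) := by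
  refine ⟨hS, fun L hL j hj hLS => ?_⟩
  have hlen : L.length = k + 1 := by
    have := congrArg List.length hLS
    rw [List.length_eraseIdx_of_lt hj, length_flag] at this
    omega
  have hjk : j ≤ k := by omega
  obtain ⟨T, hTbot, hTtop, hTL⟩ := exists_eq_flag L
  rw [hlen] at hTtop hTL
  rw [← hTL, eraseIdx_flag hjk, flag_eq_flag_iff] at hLS
  rw [← hTL, isFace_flag_iff hTbot hTtop] at hL
  obtain ⟨hchain, hdesc⟩ := hL
  have hlow : ∀ i ≤ j, T i = S i := by
    intro i hi
    rcases i.eq_zero_or_pos with rfl | hi0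
    · rw [hTbot, hbot]
    · simpa [hi] using hLS i (Finset.mem_Icc.2 ⟨hi0, hi.trans hjk⟩)
  have hhigh : ∀ i, j < i → i ≤ k + 1 → T (i + 1) = S i := by
    intro i hji hik
    rcases hik.eq_or_lt with rfl | hik
    · rw [hTtop, htop]
    · simpa [hji.not_ge] using hLS i (Finset.mem_Icc.2 ⟨by omega, by omega⟩)
  obtain ⟨b, hb⟩ := hpivot j hjk
  exact hb.not_forall_descends_of_insert hjk hlow hhigh (hchain j (by omega)).subset
    (hchain (j + 1) (by omega)).subset fun i hi => hdesc i (by omega)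

end Faces

section Homology

variable {n k : ℕ}

open scoped Classical in
/-- The basis element of the chain group belonging to the list `L`, with the junk value `0` if `L`
is not a face with `k` members. -/
noncomputable def faceChain (n k : ℕ) (L : List (Finset (Fin n))) : HFace n k →₀ ℤ :=
  if h : IsFace n L ∧ L.length = k then Finsupp.single ⟨L, h⟩ 1 else 0

theorem faceChain_val (F : HFace n k) : faceChain n k F.1 = Finsupp.single F 1 :=
  dif_pos F.2

theorem faceChain_apply_of_ne {L : List (Finset (Fin n))} {F : HFace n k} (h : L ≠ F.1) :
    faceChain n k L F = 0 := by
  unfold faceChain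
  split_ifs with hL
  · exact Finsupp.single_eq_of_ne fun hF => h (congrArg Subtype.val hF).symm
  · rfl

theorem bdry_single (L : HFace n (k + 1)) (c : ℤ) :
    bdry n k (Finsupp.single L c) =
      c • ∑ i : Fin (k + 1), (-1 : ℤ) ^ (i : ℕ) • faceChain n k (L.1.eraseIdx i) := by
  have h : bdryElem n k L =
      ∑ i : Fin (k + 1), (-1 : ℤ) ^ (i : ℕ) • faceChain n k (L.1.eraseIdx i) := by
    refine Finset.sum_congr rfl fun i _ => ?_
    unfold faceChain
    split_ifs
    · exact (Finsupp.smul_single_one _ _).symm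
    · exact (smul_zero _).symm
  simp [bdry, h]

theorem bdry_faceChain {L : List (Finset (Fin n))} (hL : IsFace n L) (hlen : L.length = k + 1) :
    bdry n k (faceChain n (k + 1) L) =
      ∑ i : Fin (k + 1), (-1 : ℤ) ^ (i : ℕ) • faceChain n k (L.eraseIdx i) := by
  obtain ⟨F, rfl⟩ : ∃ F : HFace n (k + 1), F.1 = L := ⟨⟨L, hL, hlen⟩, rfl⟩
  rw [faceChain_val, bdry_single, one_smul]

theorem bdry_apply_eq_zero_of_isFacet {F : HFace n k} (hF : IsFacet n F.1)
    (w : HFace n (k + 1) →₀ ℤ) : bdry n k w F = 0 := by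
  induction w using Finsupp.induction_linear with
  | zero => simp
  | add f g hf hg => rw [map_add, Finsupp.add_apply, hf, hg, add_zero]
  | single L c =>
    have herase : ∀ i : Fin (k + 1), faceChain n k (L.1.eraseIdx i) F = 0 := fun i =>
      faceChain_apply_of_ne (hF.2 L.1 L.2.1 i (i.2.trans_eq L.2.2.symm))
    simp [bdry_single, herase]

theorem nontrivial_reducedHomology_of_isFacet {z : HFace n (k + 1) →₀ ℤ} (hz : bdry n k z = 0)
    {F : HFace n (k + 1)} (hF : IsFacet n F.1) (hzF : z F ≠ 0) :
    Nontrivial (ReducedHomology n k) := by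
  refine Submodule.Quotient.nontrivial_iff.2 fun htop => hzF ?_
  obtain ⟨w, hw⟩ : (⟨z, hz⟩ : LinearMap.ker (bdry n k)) ∈
      (LinearMap.range (bdry n (k + 1))).comap (LinearMap.ker (bdry n k)).subtype :=
    htop ▸ Submodule.mem_top
  rw [← bdry_apply_eq_zero_of_isFacet hF w, hw, Submodule.subtype_apply]

end Homology

section CrossPolytope

variable {n k : ℕ} {A B : ℕ → Finset (Fin n)}

/-- The fundamental chain of the cross-polytope with antipodal vertices `A i` and `B i` for
`1 ≤ i ≤ m`: the signed sum of the `2 ^ m` flags choosing one vertex from each pair, where `s` is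
the set of the indices at which `B` is chosen. -/
noncomputable def crossPolytopeChain (m : ℕ) (A B : ℕ → Finset (Fin n)) : HFace n m →₀ ℤ :=
  ∑ s ∈ (Finset.Icc 1 m).powerset, (-1 : ℤ) ^ s.card • faceChain n m (flag m (s.piecewise B A))

theorem eraseIdx_flag_piecewise_insert {j : ℕ} (hj : j ≤ k) (s : Finset ℕ) :
    (flag (k + 1) ((insert (j + 1) s).piecewise B A)).eraseIdx j =
      (flag (k + 1) (s.piecewise B A)).eraseIdx j := by
  rw [eraseIdx_flag hj, eraseIdx_flag hj, flag_eq_flag_iff]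
  intro i _
  split_ifs with hij
  · exact s.piecewise_insert_of_ne B A (by omega)
  · exact s.piecewise_insert_of_ne B A (by omega)

theorem bdry_crossPolytopeChain
    (hface : ∀ s ⊆ Finset.Icc 1 (k + 1), IsFace n (flag (k + 1) (s.piecewise B A))) :
    bdry n k (crossPolytopeChain (k + 1) A B) = 0 := by
  have hbdry : bdry n k (crossPolytopeChain (k + 1) A B) =
      ∑ s ∈ (Finset.Icc 1 (k + 1)).powerset, (-1 : ℤ) ^ s.card • ∑ j : Fin (k + 1),
        (-1 : ℤ) ^ (j : ℕ) • faceChain n k ((flag (k + 1) (s.piecewise B A)).eraseIdx j) := by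
    rw [crossPolytopeChain, map_sum]
    refine Finset.sum_congr rfl fun s hs => ?_
    rw [map_smul, bdry_faceChain (hface s (Finset.mem_powerset.1 hs)) (length_flag _ _)]
  simp only [hbdry, Finset.smul_sum]
  rw [Finset.sum_comm]
  refine Finset.sum_eq_zero fun j _ => ?_
  have hmem : (j : ℕ) + 1 ∈ Finset.Icc 1 (k + 1) := Finset.mem_Icc.2 ⟨by omega, by omega⟩
  rw [← Finset.insert_erase hmem, Finset.sum_powerset_insert (Finset.notMem_erase _ _),
    ← Finset.sum_add_distrib]
  refine Finset.sum_eq_zero fun t ht => ?_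
  have hjt : (j : ℕ) + 1 ∉ t := fun h =>
    Finset.notMem_erase _ _ (Finset.mem_powerset.1 ht h)
  rw [eraseIdx_flag_piecewise_insert (by omega), Finset.card_insert_of_notMem hjt, pow_succ,
    mul_neg_one, neg_smul, add_neg_cancel]

theorem crossPolytopeChain_apply {F : HFace n k} (hF : F.1 = flag k A)
    (hne : ∀ i ∈ Finset.Icc 1 k, A i ≠ B i) : crossPolytopeChain k A B F = 1 := by
  have hother : ∀ s ∈ (Finset.Icc 1 k).powerset, s ≠ ∅ →
      ((-1 : ℤ) ^ s.card • faceChain n k (flag k (s.piecewise B A))) F = 0 := by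
    intro s hs hs0
    obtain ⟨i, hi⟩ := Finset.nonempty_iff_ne_empty.2 hs0
    rw [Finsupp.smul_apply, faceChain_apply_of_ne, smul_zero]
    intro h
    have hAB := flag_eq_flag_iff.1 (h.trans hF) i (Finset.mem_powerset.1 hs hi)
    rw [Finset.piecewise_eq_of_mem _ _ _ hi] at hAB
    exact hne i (Finset.mem_powerset.1 hs hi) hAB.symm
  rw [crossPolytopeChain, Finsupp.finsetSum_apply,
    Finset.sum_eq_single_of_mem ∅ (Finset.empty_mem_powerset _) hother, Finset.card_empty, pow_zero,
    one_smul, Finset.piecewise_empty, ← hF, faceChain_val, Finsupp.single_eq_same]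

theorem nontrivial_reducedHomology_of_crossPolytope
    (hface : ∀ s ⊆ Finset.Icc 1 (k + 1), IsFace n (flag (k + 1) (s.piecewise B A)))
    (hne : ∀ i ∈ Finset.Icc 1 (k + 1), A i ≠ B i) (hfacet : IsFacet n (flag (k + 1) A)) :
    Nontrivial (ReducedHomology n k) := by
  let F : HFace n (k + 1) := ⟨flag (k + 1) A, hfacet.1, length_flag _ _⟩
  refine nontrivial_reducedHomology_of_isFacet (bdry_crossPolytopeChain hface) (F := F) hfacet ?_
  rw [crossPolytopeChain_apply rfl hne]
  exact one_ne_zero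

end CrossPolytope

section PeaksAndValleys

/-- The maximum of the union of the two `i`-th vertices of the cross-polytope (`i ≥ 1`): it grows
by one with each of the first `J` steps and by three with each later one, and
`n = peak J (k + 1) + 1`. The truncation in `3 * i - J` is harmless, as `J + i` is then the
maximum. -/
def peak (J i : ℕ) : ℕ :=
  max (J + i) (3 * i - J)

/-- The least element of the `i`-th block of every flag of the cross-polytope. -/
def valley (J i : ℕ) : ℕ :=
  if i ≤ J then J - i else peak J i - 2

/-- The two `i`-th vertices of the cross-polytope, as subsets of `{0, …, n - 1}`: the interval
`[J + 1 - i, peak J (i - 1)]` together with `peak J i - δ`. The choice `δ = 1` gives the vertex of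
the distinguished facet and `δ = 0` its antipode; for `i = 0` the set is empty. -/
def level (n J δ i : ℕ) : Finset (Fin n) :=
  {x | J < x + i ∧ ((x : ℕ) ≤ peak J (i - 1) ∨ x + δ = peak J i)}

variable {n k J i δ δ' δ'' : ℕ}

theorem peak_of_le (h : i ≤ J) : peak J i = J + i := by
  unfold peak
  omega

theorem peak_of_ge (h : J ≤ i) : peak J i = 3 * i - J := by
  unfold peak
  omega

theorem strictMono_peak (J : ℕ) : StrictMono (peak J) := by
  intro i j hij
  unfold peak
  omega

theorem valley_of_le (h : i ≤ J) : valley J i = J - i :=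
  if_pos h

theorem valley_of_lt (h : J < i) : valley J i = 3 * i - J - 2 := by
  rw [valley, if_neg h.not_ge, peak_of_ge h.le]

theorem valley_le_peak (J i : ℕ) : valley J i ≤ peak J i := by
  unfold valley peak
  split_ifs <;> omega

theorem mem_level {x : Fin n} :
    x ∈ level n J δ i ↔ J < x + i ∧ ((x : ℕ) ≤ peak J (i - 1) ∨ x + δ = peak J i) := by
  simp [level]

theorem level_zero : level n J δ 0 = ∅ := by
  ext x
  simp only [mem_level, peak, Finset.notMem_empty, iff_false]
  omega

theorem level_eq_univ (hJ : J ≤ k + 1) (hn : n = peak J (k + 1) + 1) :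
    level n J δ (k + 2) = Finset.univ := by
  ext x
  simp only [mem_level, Finset.mem_univ, iff_true]
  exact ⟨by omega, Or.inl (Nat.lt_succ_iff.1 (x.2.trans_eq hn))⟩

theorem level_one_ne_level_zero (hi : i ≠ 0) (hn : peak J i < n) :
    level n J 1 i ≠ level n J 0 i := by
  intro h
  have hpeak : ⟨peak J i, hn⟩ ∈ level n J 1 i := by
    simp only [h, mem_level, peak]
    omega
  simp only [mem_level, peak] at hpeak
  omega

theorem level_subset_level_succ : level n J δ i ⊆ level n J δ' (i + 1) := by
  intro x hx
  simp only [mem_level, peak] at hx ⊢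
  omega

theorem valley_lt (hn : peak J i < n) : valley J i < n := by
  unfold valley peak at *
  split_ifs <;> omega

theorem valley_mem_level_sdiff (hδ : δ ≤ 1) (hn : peak J i < n) :
    ⟨valley J i, valley_lt hn⟩ ∈ level n J δ' (i + 1) \ level n J δ i := by
  simp only [Finset.mem_sdiff, mem_level, peak, valley]
  split_ifs <;> omega

theorem level_ssubset_level_succ (hδ : δ ≤ 1) (hn : peak J i < n) :
    level n J δ i ⊂ level n J δ' (i + 1) :=
  (Finset.ssubset_iff_of_subset level_subset_level_succ).2
    ⟨_, Finset.mem_sdiff.1 (valley_mem_level_sdiff hδ hn)⟩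

theorem exists_peak_sub_mem_level_sdiff (hi : J ≤ i) (hδ' : δ' ≤ 1) (hn : peak J (i + 1) < n) :
    ∃ x ∈ level n J δ' (i + 1) \ level n J δ i, (x : ℕ) + δ' = peak J (i + 1) := by
  have hpeak : peak J i + 3 = peak J (i + 1) := by
    rw [peak_of_ge hi, peak_of_ge (by omega)]
    omega
  have hprev : peak J (i - 1) ≤ peak J i := (strictMono_peak J).monotone (Nat.sub_le i 1)
  refine ⟨⟨peak J (i + 1) - δ', by omega⟩, ?_, by simp only; omega⟩
  simp only [Finset.mem_sdiff, mem_level]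
  omega

theorem descends_level (hδ : δ ≤ 1) (hδ' : δ' ≤ 1) (hn : peak J (i + 1) < n) :
    Descends (level n J δ' (i + 1) \ level n J δ i)
      (level n J δ'' (i + 2) \ level n J δ' (i + 1)) := by
  have hvalley := valley_mem_level_sdiff (δ' := δ'') hδ' hn
  rcases Nat.lt_or_ge i J with hi | hi
  · have hn' : peak J i < n := (strictMono_peak J (Nat.lt_succ_self i)).trans hn
    refine ⟨_, valley_mem_level_sdiff hδ hn', _, hvalley, ?_⟩
    rw [Fin.mk_lt_mk, valley_of_le hi.le, valley_of_le hi]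
    omega
  · obtain ⟨a, ha, ha_peak⟩ := exists_peak_sub_mem_level_sdiff hi hδ' hn
    refine ⟨a, ha, _, hvalley, ?_⟩
    rw [peak_of_ge (by omega)] at ha_peak
    have hvalley_eq : valley J (i + 1) = 3 * (i + 1) - J - 2 := valley_of_lt (Nat.lt_succ_of_le hi)
    change valley J (i + 1) < (a : ℕ)
    omega

theorem mem_block_level {x : Fin n} (hx : x ∈ block (level n J 1) i) :
    (x : ℕ) = valley J i ∨ (x : ℕ) = peak J i ∨ (x : ℕ) + 1 = peak J (i + 1) := by
  rw [block, Finset.mem_sdiff, mem_level, mem_level, Nat.add_sub_cancel] at hx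
  rcases Nat.lt_or_ge J i with hi | hi
  · rw [valley_of_lt hi]
    rw [peak_of_ge hi.le, peak_of_ge (show J ≤ i - 1 by omega)] at *
    omega
  · rw [valley_of_le hi]
    rw [peak_of_le hi, peak_of_le (show i - 1 ≤ J by omega)] at *
    omega

theorem val_le_peak_of_mem_level {x : Fin n} (hx : x ∈ level n J 1 i) : (x : ℕ) ≤ peak J i := by
  have hpeak : peak J (i - 1) ≤ peak J i := (strictMono_peak J).monotone (Nat.sub_le i 1)
  rw [mem_level] at hx
  omega

theorem isPivot_level (hn : n = peak J (k + 1) + 1) (hi : i ≤ k + 1) {b : Fin n}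
    (hb : (b : ℕ) = peak J i) : IsPivot (level n J 1) (k + 1) i b where
  below := by
    rintro x ⟨hx, hxb⟩ y ⟨hy, hyb⟩
    have hpeak : peak J i < peak J (i + 1) := strictMono_peak J (Nat.lt_succ_self i)
    have hx := mem_block_level hx
    have hy := mem_block_level hy
    omega
  above := by
    rintro x ⟨hx, hbx⟩ y ⟨hy, hby⟩
    have hvalley := valley_le_peak J i
    have hx := mem_block_level hx
    have hy := mem_block_level hy
    omega
  prev := by
    rcases eq_or_ne i 0 with rfl | hi0
    · refine Or.inl fun x hx => ?_
      have hvalley : valley J 0 = peak J 0 := by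
        rw [valley_of_le J.zero_le, peak_of_le J.zero_le, Nat.sub_zero, Nat.add_zero]
      have hpeak : peak J 0 < peak J (0 + 1) := strictMono_peak J (Nat.lt_succ_self 0)
      have hx := mem_block_level hx
      omega
    · refine Or.inr ⟨hi0, fun y hy => ?_⟩
      rw [block, Nat.sub_add_cancel (Nat.one_le_iff_ne_zero.2 hi0)] at hy
      exact Fin.le_def.2 (hb ▸ val_le_peak_of_mem_level (Finset.mem_sdiff.1 hy).1)
  next := by
    rcases Nat.lt_or_ge i J with hiJ | hJi
    · refine Or.inl fun x hx => ?_
      have hvalley := valley_le_peak J i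
      have hpeak : peak J (i + 1) = peak J i + 1 := by
        rw [peak_of_le hiJ, peak_of_le hiJ.le, Nat.add_assoc]
      have hx := mem_block_level hx
      omega
    rcases hi.eq_or_lt with rfl | hik
    · exact Or.inl fun x _ => Fin.le_def.2 (by omega)
    · refine Or.inr ⟨hik, fun y hy => ?_⟩
      have hvalley : peak J i ≤ valley J (i + 1) := by
        rw [peak_of_ge hJi, valley_of_lt (Nat.lt_succ_of_le hJi)]
        omega
      have hpeak₁ : peak J i < peak J (i + 1) := strictMono_peak J (Nat.lt_succ_self i)
      have hpeak₂ : peak J (i + 1) < peak J (i + 1 + 1) := strictMono_peak J (Nat.lt_succ_self _)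
      have hy := mem_block_level hy
      omega

theorem peak_lt (hn : n = peak J (k + 1) + 1) (hi : i ≤ k + 1) : peak J i < n :=
  hn ▸ Nat.lt_succ_of_le ((strictMono_peak J).monotone hi)

theorem isFace_flag_level (hJ : J ≤ k + 1) (hn : n = peak J (k + 1) + 1) {ε : ℕ → ℕ}
    (hε : ∀ i, ε i ≤ 1) : IsFace n (flag (k + 1) fun i => level n J (ε i) i) := by
  refine (isFace_flag_iff (S := fun i => level n J (ε i) i) level_zero
    (level_eq_univ hJ hn)).2 ⟨fun i hi => ?_, fun i hi => ?_⟩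
  · exact level_ssubset_level_succ (hε i) (peak_lt hn hi)
  · exact descends_level (hε i) (hε (i + 1)) (peak_lt hn hi)

theorem isFace_flag_piecewise_level (hJ : J ≤ k + 1) (hn : n = peak J (k + 1) + 1)
    (s : Finset ℕ) : IsFace n (flag (k + 1) (s.piecewise (level n J 0) (level n J 1))) := by
  have hlevel : s.piecewise (level n J 0) (level n J 1) =
      fun i => level n J (if i ∈ s then 0 else 1) i := by
    funext i
    by_cases hi : i ∈ s <;> simp [hi]
  rw [hlevel]
  exact isFace_flag_level hJ hn fun i => by split_ifs <;> omega

theorem isFacet_flag_level (hJ : J ≤ k + 1) (hn : n = peak J (k + 1) + 1) :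
    IsFacet n (flag (k + 1) (level n J 1)) :=
  isFacet_flag_of_isPivot level_zero (level_eq_univ hJ hn)
    (isFace_flag_level hJ hn fun _ => le_rfl)
    fun j hj => ⟨⟨peak J j, peak_lt hn hj⟩, isPivot_level hn hj rfl⟩

end PeaksAndValleys

/-- for all `k ≥ 0` and `2k+3 ≤ n ≤ 3k+4`, the reduced homology
group `H̃ₖ(Δₙ; ℤ)` is nonzero. -/
theorem reduced_homology_nontrivial (k n : ℕ) (h1 : 2 * k + 3 ≤ n) (h2 : n ≤ 3 * k + 4) :
    Nontrivial (ReducedHomology n k) := by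
  obtain ⟨J, hJ, hn⟩ : ∃ J ≤ k + 1, n = peak J (k + 1) + 1 := by
    refine ⟨3 * k + 4 - n, by omega, ?_⟩
    rw [peak_of_ge (by omega)]
    omega
  have hne : ∀ i ∈ Finset.Icc 1 (k + 1), level n J 1 i ≠ level n J 0 i := fun i hi =>
    have ⟨hi_pos, hik⟩ := Finset.mem_Icc.1 hi
    level_one_ne_level_zero (Nat.one_le_iff_ne_zero.1 hi_pos) (peak_lt hn hik)
  exact nontrivial_reducedHomology_of_crossPolytope
    (fun s _ => isFace_flag_piecewise_level hJ hn s) hne (isFacet_flag_level hJ hn)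
end

section
/- For all integers i ≥ 0 and n ≥ 2, the reduced homology H̃_i(Δ_n; ℤ) is nonzero if and only if (3i+5)/2 ≤ n ≤ 3i+4, equivalently (n−4)/3 ≤ i ≤ (2n−5)/3. -/
/-!
Record a flag by the word of its successive differences: the faces become words of disjoint blocks
in which adjacent blocks descend, and deleting a member of the flag merges two adjacent blocks.

Cutting every word behind the block of the largest letter `M` filters the complex, and up to terms
of lower filtration the boundary is that of a tensor product of two smaller complexes. Over a field
this allows contracting homotopies of the smaller complexes to be extended, up to a defect that
pushes cycles towards short second factors. In low degrees a cycle can thus be moved until its last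
block contains the two largest letters, and there it bounds. In high degrees a cycle bounds as
soon as its part beginning with the block `{M}`, a cycle on the other letters, does; the same
criterion for the largest letter but one, `M'`, is met by that part, because the block `{M, M'}` can
only be cut as `{M}{M'}`. Exactness over all `𝔽_p` gives exactness over `ℤ` by Nakayama's lemma.

In the remaining degrees one builds, by induction on the number of letters, a cycle in which a word
occurs that is not obtained by merging two blocks of any other word; such a cycle cannot bound.
-/

namespace EdelmanReiner

open Finsupp

/-! ### Words and their boundary -/

section Words

variable {α : Type*} [LinearOrder α] {R : Type*} [CommRing R]

/-- Formal `R`-combinations of words whose letters are finite sets ("blocks"). A flag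
`S₁ ⊂ ⋯ ⊂ Sⱼ` is encoded by the word of its successive differences, including the last one,
`univ \ Sⱼ`; deleting a member of the flag merges two adjacent blocks. -/
abbrev BlockChain (R α : Type*) [CommRing R] := List (Finset α) →₀ R

/-- The union of the blocks of a word. -/
def letters : List (Finset α) → Finset α
  | [] => ∅
  | B :: L => B ∪ letters L

@[simp] lemma letters_nil : letters ([] : List (Finset α)) = ∅ := rfl

@[simp] lemma letters_cons (B : Finset α) (L : List (Finset α)) :
    letters (B :: L) = B ∪ letters L := rfl

@[simp] lemma letters_append (L L' : List (Finset α)) :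
    letters (L ++ L') = letters L ∪ letters L' := by
  induction L with
  | nil => simp
  | cons B L ih => simp [ih, Finset.union_assoc]

lemma mem_letters {a : α} {L : List (Finset α)} : a ∈ letters L ↔ ∃ B ∈ L, a ∈ B := by
  induction L with
  | nil => simp
  | cons B L ih => simp [ih]

/-- The condition `max B > min C` on adjacent blocks of a face, in a form that makes sense for
empty blocks too. -/
def Descends (B C : Finset α) : Prop := ∃ a ∈ B, ∃ c ∈ C, c < a

lemma Descends.mono {B C B' C' : Finset α} (h : Descends B C) (hB : B ⊆ B') (hC : C ⊆ C') :
    Descends B' C' := by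
  obtain ⟨a, ha, c, hc, hlt⟩ := h
  exact ⟨a, hB ha, c, hC hc, hlt⟩

/-- Words of nonempty, pairwise disjoint blocks in which adjacent blocks descend: the words that
encode the faces of the h-complex. -/
structure IsDescentWord (L : List (Finset α)) : Prop where
  nonempty : ∀ B ∈ L, B.Nonempty
  disjoint : L.Pairwise Disjoint
  descends : L.IsChain Descends

lemma isDescentWord_nil : IsDescentWord ([] : List (Finset α)) := ⟨by simp, by simp, by simp⟩

lemma disjoint_letters_right {B : Finset α} {L : List (Finset α)} :
    Disjoint B (letters L) ↔ ∀ C ∈ L, Disjoint B C := by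
  induction L with
  | nil => simp
  | cons C L ih => simp [Finset.disjoint_union_right, ih]

lemma isDescentWord_cons {B : Finset α} {L : List (Finset α)} :
    IsDescentWord (B :: L) ↔
      B.Nonempty ∧ Disjoint B (letters L) ∧ (∀ C ∈ L.head?, Descends B C) ∧ IsDescentWord L := by
  rw [disjoint_letters_right]
  constructor
  · rintro ⟨hne, hdis, hdesc⟩
    rw [List.forall_mem_cons] at hne
    rw [List.pairwise_cons] at hdis
    rw [List.isChain_cons] at hdesc
    exact ⟨hne.1, hdis.1, hdesc.1, hne.2, hdis.2, hdesc.2⟩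
  · rintro ⟨hB, hBL, hdesc, hL⟩
    exact ⟨List.forall_mem_cons.2 ⟨hB, hL.nonempty⟩, List.pairwise_cons.2 ⟨hBL, hL.disjoint⟩,
      List.isChain_cons.2 ⟨hdesc, hL.descends⟩⟩

lemma IsDescentWord.eq_nil {L : List (Finset α)} (hL : IsDescentWord L) (h : letters L = ∅) :
    L = [] := by
  cases L with
  | nil => rfl
  | cons B L =>
    obtain ⟨a, ha⟩ := hL.nonempty B (by simp)
    simp only [letters_cons, Finset.union_eq_empty] at h
    simp [h.1] at ha

/-- The descent words with `k` blocks whose set of letters is `S`. -/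
def descentWords (S : Finset α) (k : ℕ) : Set (List (Finset α)) :=
  {L | IsDescentWord L ∧ letters L = S ∧ L.length = k}

lemma eq_nil_of_mem_descentWords_zero {S : Finset α} {L : List (Finset α)}
    (h : L ∈ descentWords S 0) : L = [] :=
  List.length_eq_zero_iff.1 h.2.2

lemma descentWords_zero_eq_empty {S : Finset α} (hS : S.Nonempty) : descentWords S 0 = ∅ := by
  refine Set.eq_empty_of_forall_notMem fun L hL => hS.ne_empty ?_
  rw [← hL.2.1, eq_nil_of_mem_descentWords_zero hL, letters_nil]

lemma descentWords_empty_eq_empty {k : ℕ} (hk : k ≠ 0) :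
    descentWords (∅ : Finset α) k = ∅ := by
  refine Set.eq_empty_of_forall_notMem fun L hL => hk ?_
  rw [← hL.2.2, hL.1.eq_nil hL.2.1, List.length_nil]

variable (R) in
/-- The chains of degree `k` on the letters `S`: combinations of descent words. -/
abbrev chains (S : Finset α) (k : ℕ) : Submodule R (BlockChain R α) :=
  supported R R (descentWords S k)

lemma single_mem_chains {S : Finset α} {k : ℕ} {L : List (Finset α)} (h : L ∈ descentWords S k)
    (r : R) : single L r ∈ chains R S k :=
  single_mem_supported R r h

lemma mem_chains {S : Finset α} {k : ℕ} {x : BlockChain R α} :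
    x ∈ chains R S k ↔ ∀ L, x L ≠ 0 → L ∈ descentWords S k := by
  simp only [mem_supported, Set.subset_def, Finset.mem_coe, mem_support_iff]

lemma eq_zero_of_mem_chains_zero {S : Finset α} (hS : S.Nonempty) {x : BlockChain R α}
    (hx : x ∈ chains R S 0) : x = 0 := by
  simpa [chains, descentWords_zero_eq_empty hS] using hx

lemma eq_zero_of_mem_chains_empty {k : ℕ} (hk : k ≠ 0) {x : BlockChain R α}
    (hx : x ∈ chains R ∅ k) : x = 0 := by
  simpa [chains, descentWords_empty_eq_empty hk] using hx

end Words

section FreeModule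

variable {X R M : Type*} [CommRing R] [AddCommGroup M] [Module R M]

lemma map_mem_of_mem_supported {A : Set X} {N : Submodule R M} {f : (X →₀ R) →ₗ[R] M}
    (hf : ∀ a ∈ A, f (single a 1) ∈ N) {x : X →₀ R} (hx : x ∈ supported R R A) : f x ∈ N := by
  rw [supported_eq_span_single] at hx
  have hle : Submodule.span R ((fun i => single i (1 : R)) '' A) ≤ N.comap f :=
    Submodule.span_le.2 (Set.image_subset_iff.2 hf)
  exact hle hx

lemma eqOn_supported {A : Set X} {f g : (X →₀ R) →ₗ[R] M}
    (hfg : ∀ a ∈ A, f (single a 1) = g (single a 1)) {x : X →₀ R}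
    (hx : x ∈ supported R R A) : f x = g x := by
  have h : (f - g) x ∈ (⊥ : Submodule R M) :=
    map_mem_of_mem_supported (fun a ha => by simp [hfg a ha]) hx
  simpa [sub_eq_zero] using h

lemma eq_of_eq_on_single {f g : (X →₀ R) →ₗ[R] M} (h : ∀ a, f (single a 1) = g (single a 1))
    (x : X →₀ R) : f x = g x :=
  eqOn_supported (A := Set.univ) (fun a _ => h a) (by simp)

lemma map₂_mem_of_mem_supported {X' : Type*} {A : Set X} {B : Set X'} {N : Submodule R M}
    {f : (X →₀ R) →ₗ[R] (X' →₀ R) →ₗ[R] M}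
    (hf : ∀ a ∈ A, ∀ b ∈ B, f (single a 1) (single b 1) ∈ N) {x : X →₀ R} {y : X' →₀ R}
    (hx : x ∈ supported R R A) (hy : y ∈ supported R R B) : f x y ∈ N :=
  map_mem_of_mem_supported (f := f.flip y)
    (fun a ha => map_mem_of_mem_supported (f := f (single a 1)) (hf a ha) hy) hx

end FreeModule

section Prefix

variable {α R : Type*} [CommRing R]

variable (R) in
/-- Prefixing every word of a chain by the block `B`. -/
noncomputable def consBlock (B : Finset α) : BlockChain R α →ₗ[R] BlockChain R α :=
  lmapDomain R R (B :: ·)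

@[simp] lemma consBlock_single (B : Finset α) (L : List (Finset α)) (r : R) :
    consBlock R B (single L r) = single (B :: L) r := by simp [consBlock]

lemma consBlock_apply_cons (B : Finset α) (x : BlockChain R α) (L : List (Finset α)) :
    consBlock R B x (B :: L) = x L :=
  mapDomain_apply (List.cons_injective) x L

lemma exists_of_consBlock_apply_ne_zero {B : Finset α} {x : BlockChain R α}
    {F : List (Finset α)} (h : consBlock R B x F ≠ 0) : ∃ L, F = B :: L ∧ x L ≠ 0 := by
  classical
  have hF : F ∈ (mapDomain (B :: ·) x).support := by simpa [consBlock] using h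
  obtain ⟨L, hL, rfl⟩ := Finset.mem_image.1 (mapDomain_support hF)
  exact ⟨L, rfl, by simpa using hL⟩

end Prefix

section Boundary

variable {α : Type*} [LinearOrder α] {R : Type*} [CommRing R]

variable (R) in
/-- The word obtained by merging `B` into the first block of a word (zero on the empty word). -/
noncomputable def mergeHeadWord (B : Finset α) : List (Finset α) → BlockChain R α
  | [] => 0
  | C :: L => single ((B ∪ C) :: L) 1

variable (R) in
/-- The linear extension of `mergeHeadWord`. -/
noncomputable def mergeHead (B : Finset α) : BlockChain R α →ₗ[R] BlockChain R α :=
  linearCombination R (mergeHeadWord R B)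

variable (R) in
/-- The alternating sum of the words obtained by merging two adjacent blocks. -/
noncomputable def boundaryWord : List (Finset α) → BlockChain R α
  | [] => 0
  | B :: L => mergeHeadWord R B L - consBlock R B (boundaryWord L)

variable (R) in
/-- The linear extension of `boundaryWord`. It does not depend on `S` and `k`, and maps
`chains R S (k + 1)` to `chains R S k`. -/
noncomputable def boundary : BlockChain R α →ₗ[R] BlockChain R α :=
  linearCombination R (boundaryWord R)

@[simp] lemma mergeHead_single (B : Finset α) (L : List (Finset α)) (r : R) :
    mergeHead R B (single L r) = r • mergeHeadWord R B L := by simp [mergeHead]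

@[simp] lemma boundary_single (L : List (Finset α)) (r : R) :
    boundary R (single L r) = r • boundaryWord R L := by simp [boundary]

@[simp] lemma mergeHeadWord_nil (B : Finset α) : mergeHeadWord R B [] = 0 := rfl

@[simp] lemma mergeHeadWord_cons (B C : Finset α) (L : List (Finset α)) :
    mergeHeadWord R B (C :: L) = single ((B ∪ C) :: L) 1 := rfl

@[simp] lemma boundaryWord_nil : boundaryWord R ([] : List (Finset α)) = 0 := rfl

lemma boundaryWord_cons (B : Finset α) (L : List (Finset α)) :
    boundaryWord R (B :: L) = mergeHeadWord R B L - consBlock R B (boundaryWord R L) := rfl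

@[simp] lemma boundaryWord_singleton (B : Finset α) : boundaryWord R [B] = 0 := by
  simp [boundaryWord_cons]

lemma boundary_consBlock (B : Finset α) (x : BlockChain R α) :
    boundary R (consBlock R B x) = mergeHead R B x - consBlock R B (boundary R x) :=
  eq_of_eq_on_single (f := boundary R ∘ₗ consBlock R B)
    (g := mergeHead R B - consBlock R B ∘ₗ boundary R) (fun L => by simp [boundaryWord_cons]) x

lemma mergeHead_consBlock (B C : Finset α) (x : BlockChain R α) :
    mergeHead R B (consBlock R C x) = consBlock R (B ∪ C) x :=
  eq_of_eq_on_single (f := mergeHead R B ∘ₗ consBlock R C) (g := consBlock R (B ∪ C))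
    (fun L => by simp) x

lemma mergeHead_mergeHead (B C : Finset α) (x : BlockChain R α) :
    mergeHead R B (mergeHead R C x) = mergeHead R (B ∪ C) x :=
  eq_of_eq_on_single (f := mergeHead R B ∘ₗ mergeHead R C) (g := mergeHead R (B ∪ C))
    (fun L => by cases L <;> simp [Finset.union_assoc]) x

lemma boundary_mergeHead (B : Finset α) (x : BlockChain R α) :
    boundary R (mergeHead R B x) = mergeHead R B (boundary R x) := by
  refine eq_of_eq_on_single (f := boundary R ∘ₗ mergeHead R B) (g := mergeHead R B ∘ₗ boundary R)
    (fun L => ?_) x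
  cases L with
  | nil => simp
  | cons C L =>
    have hmerge : mergeHead R B (mergeHeadWord R C L) = mergeHeadWord R (B ∪ C) L := by
      simpa using mergeHead_mergeHead B C (single L (1 : R))
    simp [boundaryWord_cons, mergeHead_consBlock, hmerge]

lemma boundary_boundaryWord (L : List (Finset α)) : boundary R (boundaryWord R L) = 0 := by
  induction L with
  | nil => simp
  | cons B L ih =>
    have hmerge : boundary R (mergeHeadWord R B L) = mergeHead R B (boundaryWord R L) := by
      simpa using boundary_mergeHead B (single L (1 : R))
    simp [boundaryWord_cons, boundary_consBlock, hmerge, ih]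

theorem boundary_boundary (x : BlockChain R α) : boundary R (boundary R x) = 0 := by
  have h := eq_of_eq_on_single (f := boundary R ∘ₗ boundary R (α := α)) (g := 0)
    (fun L => by simp [boundary_boundaryWord]) x
  simpa using h

/-- `Merges G F` means that the word `F` arises from `G` by merging two adjacent blocks. -/
inductive Merges : List (Finset α) → List (Finset α) → Prop
  | head (B C : Finset α) (L : List (Finset α)) : Merges (B :: C :: L) ((B ∪ C) :: L)
  | cons (B : Finset α) {G F : List (Finset α)} : Merges G F → Merges (B :: G) (B :: F)

lemma merges_of_boundaryWord_apply_ne_zero {G F : List (Finset α)}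
    (h : boundaryWord R G F ≠ 0) : Merges G F := by
  induction G generalizing F with
  | nil => simp at h
  | cons B L ih =>
    rw [boundaryWord_cons, Finsupp.sub_apply] at h
    by_cases hhead : mergeHeadWord R B L F = 0
    · rw [hhead, zero_sub, neg_ne_zero] at h
      obtain ⟨F', rfl, hF'⟩ := exists_of_consBlock_apply_ne_zero h
      exact .cons B (ih hF')
    · cases L with
      | nil => simp at hhead
      | cons C L =>
        obtain rfl : (B ∪ C) :: L = F := by
          by_contra hne
          exact hhead (single_eq_of_ne' hne)
        exact .head B C L

namespace Merges

lemma letters_eq {G F : List (Finset α)} (h : Merges G F) : letters F = letters G := by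
  induction h with
  | head => simp [Finset.union_assoc]
  | cons B _ ih => simp [ih]

lemma length_eq {G F : List (Finset α)} (h : Merges G F) : G.length = F.length + 1 := by
  induction h with
  | head => simp
  | cons B _ ih => simp [ih]

lemma descends_head {G F : List (Finset α)} (h : Merges G F) {B : Finset α}
    (hB : ∀ C ∈ G.head?, Descends B C) : ∀ C ∈ F.head?, Descends B C := by
  cases h with
  | head C E L =>
    simp only [List.head?_cons, Option.mem_some_iff, forall_eq'] at hB ⊢
    exact hB.mono subset_rfl Finset.subset_union_left
  | cons C _ => simpa using hB

lemma isDescentWord {G F : List (Finset α)} (h : Merges G F) (hG : IsDescentWord G) :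
    IsDescentWord F := by
  induction h with
  | head B C L =>
    obtain ⟨hB, hBL, -, hCL⟩ := isDescentWord_cons.1 hG
    obtain ⟨-, hCdis, hCdesc, hL⟩ := isDescentWord_cons.1 hCL
    rw [letters_cons, Finset.disjoint_union_right] at hBL
    exact isDescentWord_cons.2 ⟨hB.mono Finset.subset_union_left,
      Finset.disjoint_union_left.2 ⟨hBL.2, hCdis⟩,
      fun E hE => (hCdesc E hE).mono Finset.subset_union_right subset_rfl, hL⟩
  | cons B h ih =>
    obtain ⟨hB, hBL, hdesc, hL⟩ := isDescentWord_cons.1 hG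
    exact isDescentWord_cons.2 ⟨hB, h.letters_eq ▸ hBL, h.descends_head hdesc, ih hL⟩

lemma mem_descentWords {G F : List (Finset α)} (h : Merges G F) {S : Finset α} {k : ℕ}
    (hG : G ∈ descentWords S (k + 1)) : F ∈ descentWords S k :=
  ⟨h.isDescentWord hG.1, h.letters_eq.trans hG.2.1,
    Nat.succ_injective (h.length_eq.symm.trans hG.2.2)⟩

end Merges

lemma boundary_mem_chains {S : Finset α} {k : ℕ} {x : BlockChain R α}
    (hx : x ∈ chains R S (k + 1)) : boundary R x ∈ chains R S k := by
  refine map_mem_of_mem_supported (fun L hL => ?_) hx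
  rw [boundary_single, one_smul, mem_chains]
  exact fun F hF => (merges_of_boundaryWord_apply_ne_zero hF).mem_descentWords hL

lemma boundary_eq_zero_of_mem_chains {S : Finset α} {k : ℕ} (hk : k ≤ 1) {x : BlockChain R α}
    (hx : x ∈ chains R S k) : boundary R x = 0 := by
  refine eqOn_supported (g := 0) (fun L hL => ?_) hx
  match L, hL.2.2 with
  | [], _ => simp
  | [B], _ => simp
  | B :: C :: L, h => simp only [List.length_cons] at h; omega

lemma consBlock_mem_chains {B S : Finset α} {k : ℕ} (hB : B.Nonempty) (hBS : Disjoint B S)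
    {x : BlockChain R α} (hx : x ∈ chains R S k)
    (hdesc : ∀ L, x L ≠ 0 → ∀ C ∈ L.head?, Descends B C) :
    consBlock R B x ∈ chains R (B ∪ S) (k + 1) := by
  rw [mem_chains] at hx ⊢
  intro F hF
  obtain ⟨L, rfl, hL⟩ := exists_of_consBlock_apply_ne_zero hF
  obtain ⟨hdw, rfl, rfl⟩ := hx L hL
  exact ⟨isDescentWord_cons.2 ⟨hB, hBS, hdesc L hL, hdw⟩, rfl, rfl⟩

lemma descends_head_of_mem_descentWords {S : Finset α} {k : ℕ} {L : List (Finset α)}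
    (hL : L ∈ descentWords S k) {M : α} (hM : ∀ a ∈ S, a < M) : ∀ C ∈ L.head?, Descends {M} C := by
  intro C hC
  have hCL := List.mem_of_mem_head? hC
  obtain ⟨c, hc⟩ := hL.1.nonempty C hCL
  exact ⟨M, Finset.mem_singleton_self M, c, hc, hM c (hL.2.1 ▸ mem_letters.2 ⟨C, hCL, hc⟩)⟩

lemma consBlock_singleton_mem_chains {S : Finset α} {k : ℕ} {M : α} (hM : ∀ a ∈ S, a < M)
    {x : BlockChain R α} (hx : x ∈ chains R S k) :
    consBlock R {M} x ∈ chains R (insert M S) (k + 1) :=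
  consBlock_mem_chains (Finset.singleton_nonempty M)
    (Finset.disjoint_singleton_left.2 fun h => (hM M h).false) hx
    fun L hL => descends_head_of_mem_descentWords (mem_chains.1 hx L hL) hM

variable (R) in
/-- Every degree `k` cycle on the letters `S` bounds. -/
def ExactAt (S : Finset α) (k : ℕ) : Prop :=
  ∀ c ∈ chains R S k, boundary R c = 0 → ∃ e ∈ chains R S (k + 1), boundary R e = c

end Boundary

/-! ### Contracting homotopies -/

section Homotopy

lemma exists_generalizedInverse {K V W : Type*} [DivisionRing K] [AddCommGroup V] [Module K V]
    [AddCommGroup W] [Module K W] (f : V →ₗ[K] W) : ∃ g : W →ₗ[K] V, ∀ x, f (g (f x)) = f x := by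
  obtain ⟨s, hs⟩ := f.rangeRestrict.exists_rightInverse_of_surjective f.range_rangeRestrict
  obtain ⟨g, hg⟩ := LinearMap.exists_extend s
  refine ⟨g, fun x => ?_⟩
  have hgx : g (f x) = s ⟨f x, x, rfl⟩ := LinearMap.congr_fun hg ⟨f x, x, rfl⟩
  rw [hgx]
  exact congrArg Subtype.val (LinearMap.congr_fun hs ⟨f x, x, rfl⟩)

variable {α : Type*} [LinearOrder α]

/-- `h` maps chains of degree `k` to chains of degree `k + 1` on the same letters. -/
def RaisesDegree {R : Type*} [CommRing R] (h : BlockChain R α →ₗ[R] BlockChain R α) : Prop :=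
  ∀ (S : Finset α) (k : ℕ), ∀ x ∈ chains R S k, h x ∈ chains R S (k + 1)

/-- The failure `1 - ∂h - h∂` of `h` to be a contracting homotopy. -/
noncomputable def defect {R : Type*} [CommRing R] (h : BlockChain R α →ₗ[R] BlockChain R α) :
    BlockChain R α →ₗ[R] BlockChain R α :=
  LinearMap.id - boundary R ∘ₗ h - h ∘ₗ boundary R

lemma defect_apply {R : Type*} [CommRing R] (h : BlockChain R α →ₗ[R] BlockChain R α)
    (x : BlockChain R α) : defect h x = x - boundary R (h x) - h (boundary R x) := rfl

variable {K : Type*} [Field K]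

lemma exists_chains_generalizedInverse (S : Finset α) (k : ℕ) :
    ∃ g : BlockChain K α →ₗ[K] BlockChain K α, (∀ x, g x ∈ chains K S (k + 1)) ∧
      ∀ x ∈ chains K S (k + 1), boundary K (g (boundary K x)) = boundary K x := by
  let f : chains K S (k + 1) →ₗ[K] BlockChain K α :=
    boundary K ∘ₗ (chains K S (k + 1)).subtype
  obtain ⟨g, hg⟩ := exists_generalizedInverse (K := K) (V := chains K S (k + 1)) f
  exact ⟨(chains K S (k + 1)).subtype ∘ₗ g, fun x => (g x).2, fun x hx => hg ⟨x, hx⟩⟩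

lemma exists_boundary_generalizedInverse :
    ∃ h : BlockChain K α →ₗ[K] BlockChain K α, RaisesDegree h ∧
      ∀ (S : Finset α) (k : ℕ), ∀ x ∈ chains K S (k + 1),
        boundary K (h (boundary K x)) = boundary K x := by
  choose g hg_mem hg using exists_chains_generalizedInverse (α := α) (K := K)
  let h : BlockChain K α →ₗ[K] BlockChain K α :=
    linearCombination K fun L => g (letters L) L.length (single L 1)
  have h_eq (S : Finset α) (k : ℕ) : ∀ x ∈ chains K S k, h x = g S k x := fun x hx =>
    eqOn_supported (fun L hL => by obtain ⟨-, rfl, rfl⟩ := hL; simp [h]) hx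
  refine ⟨h, fun S k x hx => h_eq S k x hx ▸ hg_mem S k x, fun S k x hx => ?_⟩
  rw [h_eq S k _ (boundary_mem_chains hx), hg S k x hx]

/-- Over a field a single operator contracts the complex in all exact degrees at once. -/
theorem exists_contractingHomotopy :
    ∃ h : BlockChain K α →ₗ[K] BlockChain K α, RaisesDegree h ∧
      ∀ (S : Finset α) (k : ℕ), ExactAt K S k → ∀ x ∈ chains K S k, defect h x = 0 := by
  obtain ⟨g, hg_mem, hg⟩ := exists_boundary_generalizedInverse (α := α) (K := K)
  refine ⟨g - g ∘ₗ g ∘ₗ boundary K, fun S k x hx => ?_, fun S k hS x hx => ?_⟩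
  · refine Submodule.sub_mem _ (hg_mem S k x hx) ?_
    cases k with
    | zero => simp [boundary_eq_zero_of_mem_chains zero_le_one hx]
    | succ k => exact hg_mem _ _ _ (hg_mem _ _ _ (boundary_mem_chains hx))
  · have hy : g (boundary K x) ∈ chains K S k ∧ boundary K (g (boundary K x)) = boundary K x := by
      cases k with
      | zero => simp [boundary_eq_zero_of_mem_chains zero_le_one hx]
      | succ k => exact ⟨hg_mem _ _ _ (boundary_mem_chains hx), hg S k x hx⟩
    obtain ⟨e, he, hde⟩ := hS (x - g (boundary K x)) (Submodule.sub_mem _ hx hy.1)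
      (by rw [map_sub, hy.2, sub_self])
    have hbound : boundary K (g (x - g (boundary K x))) = x - g (boundary K x) := by
      rw [← hde, hg S k e he]
    rw [map_sub, map_sub] at hbound
    simp only [defect_apply, LinearMap.sub_apply, LinearMap.comp_apply, boundary_boundary,
      map_sub, map_zero, sub_zero, hbound]
    abel

end Homotopy

/-! ### Splitting a word at its largest letter -/

section Attach

variable {α : Type*} [LinearOrder α]

/-- Enlarging the last block of a word by `E`; the empty word becomes `[E]`. With `E = {M}` for a
new largest letter `M`, the descent words are exactly the words `attach {M} X ++ Y`. -/
def attach (E : Finset α) : List (Finset α) → List (Finset α)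
  | [] => [E]
  | [B] => [B ∪ E]
  | B :: C :: L => B :: attach E (C :: L)

@[simp] lemma attach_nil (E : Finset α) : attach E [] = [E] := rfl

@[simp] lemma attach_singleton (E B : Finset α) : attach E [B] = [B ∪ E] := rfl

lemma attach_cons_cons (E B C : Finset α) (L : List (Finset α)) :
    attach E (B :: C :: L) = B :: attach E (C :: L) := rfl

lemma attach_concat (E : Finset α) (X : List (Finset α)) (B : Finset α) :
    attach E (X ++ [B]) = X ++ [B ∪ E] := by
  induction X with
  | nil => rfl
  | cons C X ih => cases X with
    | nil => rfl
    | cons D X => exact congrArg (C :: ·) ih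

lemma length_attach (E : Finset α) (X : List (Finset α)) :
    (attach E X).length = max X.length 1 := by
  rcases X.eq_nil_or_concat' with rfl | ⟨X, B, rfl⟩ <;> simp [attach_concat]

lemma attach_ne_nil (E : Finset α) (X : List (Finset α)) : attach E X ≠ [] := by
  rcases X.eq_nil_or_concat' with rfl | ⟨X, B, rfl⟩ <;> simp [attach_concat]

lemma letters_attach (E : Finset α) (X : List (Finset α)) :
    letters (attach E X) = letters X ∪ E := by
  rcases X.eq_nil_or_concat' with rfl | ⟨X, B, rfl⟩ <;> simp [attach_concat, Finset.union_assoc]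

lemma subset_of_mem_getLast?_attach {E B : Finset α} {X : List (Finset α)}
    (hB : B ∈ (attach E X).getLast?) : E ⊆ B := by
  rcases X.eq_nil_or_concat' with rfl | ⟨X, C, rfl⟩
  · obtain rfl : E = B := by simpa using hB
    exact subset_rfl
  · obtain rfl : C ∪ E = B := by simpa [attach_concat] using hB
    exact Finset.subset_union_right

lemma isDescentWord_append {X Y : List (Finset α)} :
    IsDescentWord (X ++ Y) ↔ IsDescentWord X ∧ IsDescentWord Y ∧ Disjoint (letters X) (letters Y) ∧
      ∀ B ∈ X.getLast?, ∀ C ∈ Y.head?, Descends B C := by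
  have hdis : Disjoint (letters X) (letters Y) ↔ ∀ B ∈ X, ∀ C ∈ Y, Disjoint B C := by
    rw [disjoint_comm, disjoint_letters_right]
    refine forall₂_congr fun B _ => ?_
    rw [disjoint_comm, disjoint_letters_right]
  rw [hdis]
  constructor
  · rintro ⟨hne, hpair, hchain⟩
    rw [List.pairwise_append] at hpair
    rw [List.isChain_append] at hchain
    exact ⟨⟨fun B hB => hne B (by simp [hB]), hpair.1, hchain.1⟩,
      ⟨fun B hB => hne B (by simp [hB]), hpair.2.1, hchain.2.1⟩, hpair.2.2, hchain.2.2⟩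
  · rintro ⟨hX, hY, hXY, hdesc⟩
    refine ⟨fun B hB => ?_, List.pairwise_append.2 ⟨hX.disjoint, hY.disjoint, hXY⟩,
      List.isChain_append.2 ⟨hX.descends, hY.descends, hdesc⟩⟩
    exact (List.mem_append.1 hB).elim (hX.nonempty B) (hY.nonempty B)

lemma isDescentWord_singleton {B : Finset α} : IsDescentWord [B] ↔ B.Nonempty := by
  simp [isDescentWord_cons, isDescentWord_nil]

lemma isDescentWord_attach {E : Finset α} (hE : E.Nonempty) {X : List (Finset α)}
    (hX : IsDescentWord X) (hd : Disjoint (letters X) E) : IsDescentWord (attach E X) := by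
  rcases X.eq_nil_or_concat' with rfl | ⟨X, B, rfl⟩
  · simpa [isDescentWord_singleton] using hE
  · obtain ⟨hX, hB, hXB, hdesc⟩ := isDescentWord_append.1 hX
    simp only [letters_append, letters_cons, letters_nil, Finset.union_empty,
      Finset.disjoint_union_left] at hd hXB
    rw [attach_concat]
    refine isDescentWord_append.2 ⟨hX, isDescentWord_singleton.2 ?_, ?_, ?_⟩
    · exact (isDescentWord_singleton.1 hB).mono Finset.subset_union_left
    · simpa using ⟨hXB, hd.1⟩
    · intro C hC D hD
      obtain rfl : B ∪ E = D := by simpa using hD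
      exact (hdesc C hC B (by simp)).mono subset_rfl Finset.subset_union_left

lemma isDescentWord_attach_append {M : α} {X Y : List (Finset α)} (hX : IsDescentWord X)
    (hY : IsDescentWord Y) (hd : Disjoint (letters X) (letters Y)) (hMX : M ∉ letters X)
    (hMY : ∀ a ∈ letters Y, a < M) : IsDescentWord (attach {M} X ++ Y) := by
  refine isDescentWord_append.2 ⟨isDescentWord_attach (by simp) hX (by simpa using hMX), hY, ?_, ?_⟩
  · rw [letters_attach, Finset.disjoint_union_left]
    exact ⟨hd, Finset.disjoint_singleton_left.2 fun h => (hMY M h).false⟩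
  · intro B hB C hC
    have hCY : C ∈ Y := List.mem_of_mem_head? hC
    obtain ⟨c, hc⟩ := hY.nonempty C hCY
    exact ⟨M, subset_of_mem_getLast?_attach hB (by simp), c, hc,
      hMY c (mem_letters.2 ⟨C, hCY, hc⟩)⟩

lemma isDescentWord_concat_erase {M : α} {X : List (Finset α)} {B : Finset α}
    (h : IsDescentWord (X ++ [B])) (hmax : ∀ a ∈ letters X, a ≤ M) (hB : (B.erase M).Nonempty) :
    IsDescentWord (X ++ [B.erase M]) := by
  obtain ⟨hX, -, hXB, hdesc⟩ := isDescentWord_append.1 h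
  refine isDescentWord_append.2 ⟨hX, isDescentWord_singleton.2 hB, ?_, ?_⟩
  · exact hXB.mono_right (by simpa using Finset.erase_subset M B)
  · intro C hC D hD
    obtain rfl : B.erase M = D := by simpa using hD
    obtain ⟨a, ha, c, hc, hca⟩ := hdesc C hC B (by simp)
    have haM : a ≤ M := hmax a (mem_letters.2 ⟨C, List.mem_of_mem_getLast? hC, ha⟩)
    exact ⟨a, ha, c, Finset.mem_erase.2 ⟨(hca.trans_le haM).ne, hc⟩, hca⟩

lemma exists_eq_attach_append {M : α} {L : List (Finset α)} (hL : IsDescentWord L)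
    (hML : M ∈ letters L) (hmax : ∀ a ∈ letters L, a ≤ M) :
    ∃ X Y, L = attach {M} X ++ Y ∧ IsDescentWord X ∧ IsDescentWord Y ∧ M ∉ letters X ∧
      M ∉ letters Y ∧ Disjoint (letters X) (letters Y) := by
  obtain ⟨B, hB, hMB⟩ := mem_letters.1 hML
  obtain ⟨X, Y, rfl⟩ := List.append_of_mem hB
  rw [List.append_cons] at hL hmax
  obtain ⟨hXB, hY, hXBY, -⟩ := isDescentWord_append.1 hL
  obtain ⟨hX, -, hdis, hdesc⟩ := isDescentWord_append.1 hXB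
  simp only [letters_append, letters_cons, letters_nil, Finset.union_empty, Finset.mem_union,
    Finset.disjoint_union_left] at hdis hXBY hmax
  have hMX : M ∉ letters X := Finset.disjoint_right.1 hdis hMB
  have hMY : M ∉ letters Y := Finset.disjoint_left.1 hXBY.2 hMB
  rcases (B.erase M).eq_empty_or_nonempty with hBM | hBM
  · obtain rfl : B = {M} :=
      ((Finset.erase_eq_empty_iff B M).1 hBM).resolve_left (Finset.ne_empty_of_mem hMB)
    obtain rfl : X = [] := by
      rcases X.eq_nil_or_concat' with hX | ⟨X, C, rfl⟩
      · exact hX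
      · obtain ⟨a, ha, c, hc, hca⟩ := hdesc C (by simp) {M} (by simp)
        obtain rfl : c = M := by simpa using hc
        exact absurd (hmax a (Or.inl (Or.inl (by simp [ha])))) hca.not_ge
    exact ⟨[], Y, by simp, isDescentWord_nil, hY, by simp, hMY, by simp⟩
  · refine ⟨X ++ [B.erase M], Y, ?_,
      isDescentWord_concat_erase hXB (fun a ha => hmax a (Or.inl (Or.inl ha))) hBM, hY,
      by simp [hMX], hMY, ?_⟩
    · rw [attach_concat, Finset.union_singleton, Finset.insert_erase hMB,
        List.append_cons]
    · simpa using ⟨hXBY.1, hXBY.2.mono_left (Finset.erase_subset M B)⟩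

/-- The inverse `attach {M} X ++ Y ↦ (X, Y)` of the splitting at the letter `M`. -/
def splitAtLetter (M : α) : List (Finset α) → List (Finset α) × List (Finset α)
  | [] => ([], [])
  | B :: L =>
    if M ∈ B then (if B = {M} then [] else [B.erase M], L)
    else (B :: (splitAtLetter M L).1, (splitAtLetter M L).2)

lemma splitAtLetter_append {M : α} {X : List (Finset α)} (hX : M ∉ letters X)
    (L : List (Finset α)) :
    splitAtLetter M (X ++ L) = (X ++ (splitAtLetter M L).1, (splitAtLetter M L).2) := by
  induction X with
  | nil => rfl
  | cons B X ih =>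
    simp only [letters_cons, Finset.mem_union, not_or] at hX
    simp [splitAtLetter, hX.1, ih hX.2]

lemma splitAtLetter_attach_append {M : α} {X : List (Finset α)} (hX : IsDescentWord X)
    (hMX : M ∉ letters X) (Y : List (Finset α)) : splitAtLetter M (attach {M} X ++ Y) = (X, Y) := by
  rcases X.eq_nil_or_concat' with rfl | ⟨X, B, rfl⟩
  · simp [splitAtLetter]
  · simp only [letters_append, letters_cons, letters_nil, Finset.union_empty, Finset.mem_union,
      not_or] at hMX
    obtain ⟨b, hb⟩ := hX.nonempty B (by simp)
    have hne : insert M B ≠ {M} := fun h => by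
      have hbM : b ∈ ({M} : Finset α) := h ▸ Finset.mem_insert_of_mem hb
      exact hMX.2 (Finset.mem_singleton.1 hbM ▸ hb)
    rw [attach_concat, List.append_assoc, splitAtLetter_append hMX.1]
    simp [splitAtLetter, hne, Finset.erase_insert hMX.2]

end Attach

section Join

variable {α : Type*} [LinearOrder α] {R : Type*} [CommRing R]

variable (R) in
/-- The bilinear extension of `(X, Y) ↦ attach E X ++ Y`. -/
noncomputable def join (E : Finset α) :
    BlockChain R α →ₗ[R] BlockChain R α →ₗ[R] BlockChain R α :=
  linearCombination R fun X => lmapDomain R R (attach E X ++ ·)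

variable (R) in
/-- The word `attach E X ++ Y` with the block of `E` merged into the first block of `Y` (zero if
`Y` is empty). -/
noncomputable def crossWord (E : Finset α) (X : List (Finset α)) : List (Finset α) → BlockChain R α
  | [] => 0
  | C :: Y => single (attach E (attach C X) ++ Y) 1

variable (R) in
/-- The bilinear extension of `crossWord`: the part of the boundary of a join that is not a join
of boundaries. -/
noncomputable def cross (E : Finset α) :
    BlockChain R α →ₗ[R] BlockChain R α →ₗ[R] BlockChain R α :=
  linearCombination R fun X => linearCombination R (crossWord R E X)

@[simp] lemma join_single_single (E : Finset α) (X Y : List (Finset α)) (r s : R) :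
    join R E (single X r) (single Y s) = single (attach E X ++ Y) (r * s) := by
  simp [join]

@[simp] lemma cross_single_single (E : Finset α) (X Y : List (Finset α)) (r s : R) :
    cross R E (single X r) (single Y s) = (r * s) • crossWord R E X Y := by
  simp [cross, smul_smul]

@[simp] lemma crossWord_nil (E : Finset α) (X : List (Finset α)) : crossWord R E X [] = 0 := rfl

@[simp] lemma crossWord_cons (E : Finset α) (X : List (Finset α)) (C : Finset α)
    (Y : List (Finset α)) :
    crossWord R E X (C :: Y) = single (attach E (attach C X) ++ Y) 1 := rfl

lemma join_single_nil (E : Finset α) (y : BlockChain R α) :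
    join R E (single [] 1) y = consBlock R E y :=
  eq_of_eq_on_single (fun Y => by simp) y

lemma join_single_singleton (E B : Finset α) (y : BlockChain R α) :
    join R E (single [B] 1) y = consBlock R (B ∪ E) y :=
  eq_of_eq_on_single (fun Y => by simp) y

lemma join_consBlock (E B : Finset α) {x : BlockChain R α} (hx : x [] = 0) (y : BlockChain R α) :
    join R E (consBlock R B x) y = consBlock R B (join R E x y) := by
  have hsupp : x ∈ supported R R {L : List (Finset α) | L ≠ []} := by
    rw [mem_supported]
    rintro L hL rfl
    exact mem_support_iff.1 hL hx
  refine eqOn_supported (f := (join R E).flip y ∘ₗ consBlock R B)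
    (g := consBlock R B ∘ₗ (join R E).flip y) (fun L hL => ?_) hsupp
  obtain ⟨C, L, rfl⟩ := List.exists_cons_of_ne_nil hL
  exact eq_of_eq_on_single (f := join R E (consBlock R B (single (C :: L) 1)))
    (g := consBlock R B ∘ₗ join R E (single (C :: L) 1)) (fun Y => by simp [attach_cons_cons]) y

lemma boundaryWord_apply_nil (L : List (Finset α)) : boundaryWord R L [] = 0 := by
  by_contra h
  cases merges_of_boundaryWord_apply_ne_zero h

lemma crossWord_cons_cons_left (E B C : Finset α) (L Y : List (Finset α)) :
    crossWord R E (B :: C :: L) Y = consBlock R B (crossWord R E (C :: L) Y) := by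
  cases Y with
  | nil => simp
  | cons D Y =>
    obtain ⟨D', L', hL'⟩ := List.exists_cons_of_ne_nil (attach_ne_nil D (C :: L))
    simp [attach_cons_cons, hL']

lemma boundaryWord_attach_append (E : Finset α) (X Y : List (Finset α)) :
    boundaryWord R (attach E X ++ Y) =
      join R E (boundaryWord R X) (single Y 1) +
        (-1 : R) ^ max X.length 1 •
          (join R E (single X 1) (boundaryWord R Y) - crossWord R E X Y) := by
  induction X with
  | nil => cases Y <;>
      simp [boundaryWord_cons, join_single_nil, Finset.union_comm, -sub_neg_eq_add]
  | cons B X ih => cases X with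
    | nil => cases Y <;>
        simp [boundaryWord_cons, join_single_singleton, Finset.union_comm, Finset.union_left_comm]
    | cons C L =>
      have hjoin : join R E (single (B :: C :: L) 1) (boundaryWord R Y) =
          consBlock R B (join R E (single (C :: L) 1) (boundaryWord R Y)) := by
        rw [← join_consBlock E B (by simp), consBlock_single]
      have hmerge : mergeHeadWord R B (attach E (C :: L) ++ Y) =
          join R E (mergeHeadWord R B (C :: L)) (single Y 1) := by
        cases L <;> simp [attach_cons_cons, Finset.union_assoc]
      rw [attach_cons_cons, List.cons_append, boundaryWord_cons, ih, boundaryWord_cons B (C :: L),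
        hjoin, crossWord_cons_cons_left, hmerge, map_sub, LinearMap.sub_apply,
        join_consBlock E B (boundaryWord_apply_nil (C :: L))]
      simp only [List.length_cons, le_add_iff_nonneg_left, zero_le, sup_of_le_left, map_add,
        map_sub, map_smul, pow_succ, mul_neg, mul_one, neg_smul, map_neg]
      abel

/-- The Leibniz rule for joins. The exponent `max k 1` is the number of blocks of `attach E X`
when `X` has `k` blocks. -/
theorem boundary_join (E : Finset α) {S : Finset α} {k : ℕ} {x : BlockChain R α}
    (hx : x ∈ chains R S k) (y : BlockChain R α) :
    boundary R (join R E x y) =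
      join R E (boundary R x) y +
        (-1 : R) ^ max k 1 • (join R E x (boundary R y) - cross R E x y) := by
  refine eqOn_supported (f := boundary R ∘ₗ (join R E).flip y)
    (g := (join R E).flip y ∘ₗ boundary R +
      (-1 : R) ^ max k 1 • ((join R E).flip (boundary R y) - (cross R E).flip y))
    (fun X hX => ?_) hx
  refine eq_of_eq_on_single (f := boundary R ∘ₗ join R E (single X 1))
    (g := join R E (boundary R (single X 1)) +
      (-1 : R) ^ max k 1 • (join R E (single X 1) ∘ₗ boundary R - cross R E (single X 1)))
    (fun Y => ?_) y
  simp [boundaryWord_attach_append, hX.2.2]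

end Join

/-! ### Extending contracting homotopies -/

section TailFiltration

variable {α : Type*} [LinearOrder α] {R : Type*} [CommRing R]

/-- The letters and degrees of two chains whose `join R {M}` is a chain of degree `k` on
`insert M S`. -/
structure IsSplitting (S : Finset α) (k : ℕ) (S₁ : Finset α) (k₁ : ℕ) (S₂ : Finset α) (k₂ : ℕ) :
    Prop where
  disjoint : Disjoint S₁ S₂
  union_eq : S₁ ∪ S₂ = S
  degree_eq : max k₁ 1 + k₂ = k

namespace IsSplitting

variable {S S₁ S₂ : Finset α} {k k₁ k₂ : ℕ}

lemma subset_left (h : IsSplitting S k S₁ k₁ S₂ k₂) : S₁ ⊆ S :=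
  h.union_eq ▸ Finset.subset_union_left

lemma subset_right (h : IsSplitting S k S₁ k₁ S₂ k₂) : S₂ ⊆ S :=
  h.union_eq ▸ Finset.subset_union_right

lemma card_eq (h : IsSplitting S k S₁ k₁ S₂ k₂) : S₁.card + S₂.card = S.card := by
  rw [← h.union_eq, Finset.card_union_of_disjoint h.disjoint]

end IsSplitting

/-- The descent words on `insert M S` with fewer than `t` letters after the block of `M`. -/
def tailWords (M : α) (S : Finset α) (k t : ℕ) : Set (List (Finset α)) :=
  {L ∈ descentWords (insert M S) k | (letters (splitAtLetter M L).2).card < t}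

variable (R) in
/-- The filtration of the chains on `insert M S` by the number of letters after the block
of `M`. -/
abbrev tailFiltration (M : α) (S : Finset α) (k t : ℕ) : Submodule R (BlockChain R α) :=
  supported R R (tailWords M S k t)

variable {M : α} {S S₁ S₂ : Finset α} {k k₁ k₂ t : ℕ}

lemma attach_append_mem_tailWords (hM : ∀ a ∈ S, a < M) (h : IsSplitting S k S₁ k₁ S₂ k₂)
    {X Y : List (Finset α)} (hX : X ∈ descentWords S₁ k₁) (hY : Y ∈ descentWords S₂ k₂)
    (ht : S₂.card < t) : attach {M} X ++ Y ∈ tailWords M S k t := by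
  obtain ⟨hX, rfl, rfl⟩ := hX
  obtain ⟨hY, rfl, rfl⟩ := hY
  have hMX : M ∉ letters X := fun hMX => (hM M (h.subset_left hMX)).false
  refine ⟨⟨isDescentWord_attach_append hX hY h.disjoint hMX
    fun a ha => hM a (h.subset_right ha), ?_, ?_⟩, ?_⟩
  · rw [← h.union_eq, letters_append, letters_attach, Finset.union_singleton, Finset.insert_union]
  · rw [← h.degree_eq, List.length_append, length_attach]
  · rwa [splitAtLetter_attach_append hX hMX]

lemma exists_eq_attach_append_of_mem_descentWords (hM : ∀ a ∈ S, a < M) {L : List (Finset α)}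
    (hL : L ∈ descentWords (insert M S) k) :
    ∃ S₁ k₁ S₂ k₂ X Y, IsSplitting S k S₁ k₁ S₂ k₂ ∧ X ∈ descentWords S₁ k₁ ∧
      Y ∈ descentWords S₂ k₂ ∧ splitAtLetter M L = (X, Y) ∧ L = attach {M} X ++ Y := by
  obtain ⟨hL, hLS, rfl⟩ := hL
  obtain ⟨X, Y, rfl, hX, hY, hMX, hMY, hd⟩ :=
    exists_eq_attach_append hL (M := M) (by simp [hLS]) fun a ha => by
      rw [hLS, Finset.mem_insert] at ha
      exact ha.elim le_of_eq fun ha => (hM a ha).le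
  refine ⟨_, _, _, _, X, Y, ⟨hd, ?_, ?_⟩, ⟨hX, rfl, rfl⟩, ⟨hY, rfl, rfl⟩,
    splitAtLetter_attach_append hX hMX Y, rfl⟩
  · rw [letters_append, letters_attach, Finset.union_singleton, Finset.insert_union] at hLS
    have hMS : M ∉ S := fun h => (hM M h).false
    rw [← Finset.erase_insert hMS, ← hLS, Finset.erase_insert (by simp [hMX, hMY])]
  · rw [List.length_append, length_attach]

lemma join_mem_tailFiltration (hM : ∀ a ∈ S, a < M) (h : IsSplitting S k S₁ k₁ S₂ k₂)
    (ht : S₂.card < t) {x y : BlockChain R α} (hx : x ∈ chains R S₁ k₁)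
    (hy : y ∈ chains R S₂ k₂) : join R {M} x y ∈ tailFiltration R M S k t := by
  refine map₂_mem_of_mem_supported (fun X hX Y hY => ?_) hx hy
  rw [join_single_single]
  exact single_mem_supported R _ (attach_append_mem_tailWords hM h hX hY ht)

lemma cross_mem_tailFiltration (hM : ∀ a ∈ S, a < M) (h : IsSplitting S (k + 1) S₁ k₁ S₂ k₂)
    {x y : BlockChain R α} (hx : x ∈ chains R S₁ k₁) (hy : y ∈ chains R S₂ k₂) :
    cross R {M} x y ∈ tailFiltration R M S k S₂.card := by
  refine map₂_mem_of_mem_supported (fun X hX Y hY => ?_) hx hy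
  rw [cross_single_single, mul_one, one_smul]
  cases Y with
  | nil => simp
  | cons C Y =>
    obtain ⟨hX, rfl, rfl⟩ := hX
    obtain ⟨hCY, rfl, rfl⟩ := hY
    obtain ⟨hC, hCYdis, -, hY⟩ := isDescentWord_cons.1 hCY
    have hdis := h.disjoint
    rw [letters_cons, Finset.disjoint_union_right] at hdis
    have hXC : attach C X ∈ descentWords (letters X ∪ C) (max X.length 1) :=
      ⟨isDescentWord_attach hC hX hdis.1, letters_attach C X, length_attach C X⟩
    have hsplit : IsSplitting S k (letters X ∪ C) (max X.length 1) (letters Y) Y.length := by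
      refine ⟨Finset.disjoint_union_left.2 ⟨hdis.2, hCYdis⟩, ?_, ?_⟩
      · rw [← h.union_eq, letters_cons, Finset.union_assoc]
      · have := h.degree_eq
        rw [List.length_cons] at this
        omega
    refine single_mem_supported R _
      (attach_append_mem_tailWords hM hsplit hXC ⟨hY, rfl, rfl⟩ ?_)
    rw [letters_cons, Finset.card_union_of_disjoint hCYdis]
    exact lt_add_of_pos_left _ hC.card_pos

/-- Induction for the filtration: it is spanned by joins. -/
lemma map_mem_of_mem_tailFiltration (hM : ∀ a ∈ S, a < M) {V : Type*} [AddCommGroup V]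
    [Module R V] {f : BlockChain R α →ₗ[R] V} {N : Submodule R V}
    (hf : ∀ S₁ k₁ S₂ k₂, IsSplitting S k S₁ k₁ S₂ k₂ → S₂.card < t →
      ∀ x ∈ chains R S₁ k₁, ∀ y ∈ chains R S₂ k₂, f (join R {M} x y) ∈ N)
    {c : BlockChain R α} (hc : c ∈ tailFiltration R M S k t) : f c ∈ N := by
  refine map_mem_of_mem_supported (fun L hL => ?_) hc
  obtain ⟨S₁, k₁, S₂, k₂, X, Y, hsplit, hX, hY, hpair, rfl⟩ :=
    exists_eq_attach_append_of_mem_descentWords hM hL.1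
  have hcard : S₂.card < t := by simpa only [hpair, hY.2.1] using hL.2
  simpa using hf S₁ k₁ S₂ k₂ hsplit hcard _ (single_mem_chains hX 1) _ (single_mem_chains hY 1)

lemma tailFiltration_mono {s : ℕ} (hst : s ≤ t) :
    tailFiltration R M S k s ≤ tailFiltration R M S k t :=
  supported_mono fun _ hL => ⟨hL.1, hL.2.trans_le hst⟩

lemma tailFiltration_le_chains : tailFiltration R M S k t ≤ chains R (insert M S) k :=
  supported_mono fun _ hL => hL.1

lemma chains_le_tailFiltration (hM : ∀ a ∈ S, a < M) :
    chains R (insert M S) k ≤ tailFiltration R M S k (S.card + 1) := by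
  refine supported_mono fun L hL => ⟨hL, ?_⟩
  obtain ⟨S₁, k₁, S₂, k₂, X, Y, hsplit, -, hY, hpair, -⟩ :=
    exists_eq_attach_append_of_mem_descentWords hM hL
  rw [hpair, hY.2.1]
  exact Nat.lt_succ_of_le (Finset.card_le_card hsplit.subset_right)

lemma eq_zero_of_mem_tailFiltration_zero {c : BlockChain R α}
    (hc : c ∈ tailFiltration R M S k 0) : c = 0 := by
  simpa [tailFiltration, tailWords] using hc

end TailFiltration

section Perturbation

variable {α : Type*} [LinearOrder α] {R : Type*} [CommRing R]
  {h : BlockChain R α →ₗ[R] BlockChain R α} {M : α} {S S₁ S₂ : Finset α} {k k₁ k₂ t : ℕ}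

/-- The extension of an operator `h` to words containing `M`. It is the tensor product contracting
homotopy `h ⊗ 1 + (1 - ∂h - h∂) ⊗ h` for the boundary without the term `cross`. -/
noncomputable def extendHomotopy (M : α) (h : BlockChain R α →ₗ[R] BlockChain R α) :
    BlockChain R α →ₗ[R] BlockChain R α :=
  linearCombination R fun L =>
    let X : BlockChain R α := single (splitAtLetter M L).1 1
    let Y : BlockChain R α := single (splitAtLetter M L).2 1
    join R {M} (h X) Y +
      (-1 : R) ^ max (splitAtLetter M L).1.length 1 • join R {M} (defect h X) (h Y)

lemma extendHomotopy_join (hM : ∀ a ∈ S₁, a < M) {x : BlockChain R α} (hx : x ∈ chains R S₁ k₁)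
    (y : BlockChain R α) :
    extendHomotopy M h (join R {M} x y) =
      join R {M} (h x) y + (-1 : R) ^ max k₁ 1 • join R {M} (defect h x) (h y) := by
  refine eqOn_supported (f := extendHomotopy M h ∘ₗ (join R {M}).flip y)
    (g := (join R {M}).flip y ∘ₗ h +
      (-1 : R) ^ max k₁ 1 • ((join R {M}).flip (h y) ∘ₗ defect h)) (fun X hX => ?_) hx
  refine eq_of_eq_on_single (f := extendHomotopy M h ∘ₗ join R {M} (single X 1))
    (g := join R {M} (h (single X 1)) +
      (-1 : R) ^ max k₁ 1 • (join R {M} (defect h (single X 1)) ∘ₗ h)) (fun Y => ?_) y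
  have hMX : M ∉ letters X := fun hMX => (hM M (hX.2.1 ▸ hMX)).false
  simp [extendHomotopy, splitAtLetter_attach_append hX.1 hMX, hX.2.2]

lemma RaisesDegree.defect_mem_chains (hh : RaisesDegree h) {x : BlockChain R α}
    (hx : x ∈ chains R S k) : defect h x ∈ chains R S k := by
  rw [defect_apply]
  refine sub_mem (sub_mem hx (boundary_mem_chains (hh S k x hx))) ?_
  cases k with
  | zero => simp [boundary_eq_zero_of_mem_chains zero_le_one hx]
  | succ k => exact hh S k _ (boundary_mem_chains hx)

lemma boundary_defect (x : BlockChain R α) :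
    boundary R (defect h x) = defect h (boundary R x) := by
  simp [defect_apply, boundary_boundary]

lemma RaisesDegree.eq_zero_of_mem_chains_zero (hh : RaisesDegree h) {x : BlockChain R α}
    (hx : x ∈ chains R S 0) : h x = 0 := by
  rcases S.eq_empty_or_nonempty with rfl | hS
  · exact eq_zero_of_mem_chains_empty one_ne_zero (hh ∅ 0 x hx)
  · rw [EdelmanReiner.eq_zero_of_mem_chains_zero hS hx, map_zero]

lemma IsSplitting.join_homotopy_mem (hs : IsSplitting S k S₁ k₁ S₂ k₂) (hh : RaisesDegree h)
    (hM : ∀ a ∈ S, a < M) (ht : S₂.card < t) {x y : BlockChain R α} (hx : x ∈ chains R S₁ k₁)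
    (hy : y ∈ chains R S₂ k₂) : join R {M} (h x) y ∈ tailFiltration R M S (k + 1) t := by
  rcases k₁.eq_zero_or_pos with rfl | hk₁
  · simp [hh.eq_zero_of_mem_chains_zero hx]
  · have hdeg := hs.degree_eq
    exact join_mem_tailFiltration hM ⟨hs.disjoint, hs.union_eq, by omega⟩ ht (hh _ _ _ hx) hy

lemma extendHomotopy_mem_tailFiltration (hh : RaisesDegree h) (hM : ∀ a ∈ S, a < M)
    {c : BlockChain R α} (hc : c ∈ tailFiltration R M S k t) :
    extendHomotopy M h c ∈ tailFiltration R M S (k + 1) t := by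
  refine map_mem_of_mem_tailFiltration hM (fun S₁ k₁ S₂ k₂ hs ht x hx y hy => ?_) hc
  rw [extendHomotopy_join (fun a ha => hM a (hs.subset_left ha)) hx]
  refine add_mem (hs.join_homotopy_mem hh hM ht hx hy) (Submodule.smul_mem _ _ ?_)
  exact join_mem_tailFiltration hM ⟨hs.disjoint, hs.union_eq, by rw [← hs.degree_eq]; rfl⟩ ht
    (hh.defect_mem_chains hx) (hh _ _ _ hy)

lemma neg_one_pow_max_succ_smul {V : Type*} [AddCommGroup V] [Module R V] {v : V}
    (hv : k = 0 → v = 0) : (-1 : R) ^ max (k + 1) 1 • v = -((-1 : R) ^ max k 1 • v) := by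
  rcases k.eq_zero_or_pos with rfl | hk
  · simp [hv rfl]
  · rw [max_eq_left (Nat.le_add_left 1 k), max_eq_left (b := 1) hk, pow_succ, mul_neg_one, neg_smul]

lemma boundary_join_homotopy (hh : RaisesDegree h) {x : BlockChain R α} (hx : x ∈ chains R S k)
    (y : BlockChain R α) :
    boundary R (join R {M} (h x) y) = join R {M} (boundary R (h x)) y -
      (-1 : R) ^ max k 1 • (join R {M} (h x) (boundary R y) - cross R {M} (h x) y) := by
  rw [boundary_join {M} (hh S k x hx), neg_one_pow_max_succ_smul, ← sub_eq_add_neg]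
  rintro rfl
  simp [hh.eq_zero_of_mem_chains_zero hx]

lemma extendHomotopy_join_boundary (hM : ∀ a ∈ S, a < M) {x : BlockChain R α}
    (hx : x ∈ chains R S k) (y : BlockChain R α) :
    extendHomotopy M h (join R {M} (boundary R x) y) = join R {M} (h (boundary R x)) y -
      (-1 : R) ^ max k 1 • join R {M} (boundary R (defect h x)) (h y) := by
  cases k with
  | zero => simp [boundary_defect, boundary_eq_zero_of_mem_chains zero_le_one hx]
  | succ k =>
    rw [extendHomotopy_join hM (boundary_mem_chains hx), boundary_defect,
      neg_one_pow_max_succ_smul, sub_neg_eq_add]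
    rintro rfl
    simp [boundary_eq_zero_of_mem_chains le_rfl hx]

lemma defect_extendHomotopy_join (hh : RaisesDegree h) (hM : ∀ a ∈ S, a < M)
    {x : BlockChain R α} (hx : x ∈ chains R S k) (y : BlockChain R α) :
    defect (extendHomotopy M h) (join R {M} x y) =
      join R {M} (defect h x) (defect h y) + cross R {M} (defect h x) (h y) +
        (-1 : R) ^ max k 1 •
          (extendHomotopy M h (cross R {M} x y) - cross R {M} (h x) y) := by
  have hsign : (-1 : R) ^ max k 1 * (-1) ^ max k 1 = 1 := by rw [← mul_pow]; simp
  have hright : join R {M} (defect h x) (boundary R (h y)) =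
      join R {M} (defect h x) y - join R {M} (defect h x) (h (boundary R y)) -
        join R {M} (defect h x) (defect h y) := by
    rw [defect_apply h y, map_sub, map_sub]
    abel
  have hleft : join R {M} (boundary R (h x)) y =
      join R {M} x y - join R {M} (h (boundary R x)) y - join R {M} (defect h x) y := by
    simp only [defect_apply h x, map_sub, LinearMap.sub_apply]
    abel
  rw [defect_apply, extendHomotopy_join hM hx, boundary_join {M} hx, map_add, map_add, map_smul,
    map_smul, boundary_join_homotopy hh hx, boundary_join {M} (hh.defect_mem_chains hx),
    extendHomotopy_join_boundary hM hx, map_sub, extendHomotopy_join hM hx, hleft, hright]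
  simp only [smul_add, smul_sub, smul_smul, hsign, one_smul]
  abel

lemma defect_extendHomotopy_join_mem (hh : RaisesDegree h) (hM : ∀ a ∈ S, a < M)
    (hs : IsSplitting S k S₁ k₁ S₂ k₂) {x y : BlockChain R α} (hx : x ∈ chains R S₁ k₁)
    (hy : y ∈ chains R S₂ k₂) :
    defect (extendHomotopy M h) (join R {M} x y) - join R {M} (defect h x) (defect h y) ∈
      tailFiltration R M S k S₂.card := by
  rw [defect_extendHomotopy_join hh (fun a ha => hM a (hs.subset_left ha)) hx, add_assoc,
    add_sub_cancel_left]
  refine add_mem ?_ (Submodule.smul_mem _ _ (sub_mem ?_ ?_))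
  · exact cross_mem_tailFiltration hM
      ⟨hs.disjoint, hs.union_eq, by rw [← hs.degree_eq, add_assoc]⟩ (hh.defect_mem_chains hx)
      (hh _ _ _ hy)
  · cases k with
    | zero =>
      have := hs.degree_eq
      omega
    | succ k => exact extendHomotopy_mem_tailFiltration hh hM (cross_mem_tailFiltration hM hs hx hy)
  · rcases k₁.eq_zero_or_pos with rfl | hk₁
    · simp [hh.eq_zero_of_mem_chains_zero hx]
    · have hdeg := hs.degree_eq
      exact cross_mem_tailFiltration hM ⟨hs.disjoint, hs.union_eq, by omega⟩ (hh _ _ _ hx) hy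

/-- A cycle is homologous to its image under the defect of the extended homotopy, which is
`defect h ⊗ defect h` up to terms lower in the filtration. -/
theorem exists_homologous_mem_tailFiltration (hh : RaisesDegree h) (hM : ∀ a ∈ S, a < M) {s : ℕ}
    (hvanish : ∀ S₁ k₁ S₂ k₂, IsSplitting S k S₁ k₁ S₂ k₂ → s ≤ S₂.card → S₂.card < t →
      (∀ x ∈ chains R S₁ k₁, defect h x = 0) ∨ ∀ y ∈ chains R S₂ k₂, defect h y = 0)
    {c : BlockChain R α} (hc : c ∈ tailFiltration R M S k t) (hdc : boundary R c = 0) :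
    ∃ e ∈ chains R (insert M S) (k + 1), c - boundary R e ∈ tailFiltration R M S k s := by
  induction t generalizing c with
  | zero => exact ⟨0, zero_mem _, by simpa using tailFiltration_mono s.zero_le hc⟩
  | succ t ih =>
    by_cases hst : t + 1 ≤ s
    · exact ⟨0, zero_mem _, by simpa using tailFiltration_mono hst hc⟩
    have hdefect : defect (extendHomotopy M h) c ∈ tailFiltration R M S k t := by
      refine map_mem_of_mem_tailFiltration hM (fun S₁ k₁ S₂ k₂ hs ht x hx y hy => ?_) hc
      have hmem := tailFiltration_mono (Nat.le_of_lt_succ ht)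
        (defect_extendHomotopy_join_mem hh hM hs hx hy)
      suffices join R {M} (defect h x) (defect h y) ∈ tailFiltration R M S k t by
        simpa using add_mem hmem this
      rcases (Nat.le_of_lt_succ ht).lt_or_eq with hlt | heq
      · exact join_mem_tailFiltration hM hs hlt (hh.defect_mem_chains hx) (hh.defect_mem_chains hy)
      · rcases hvanish S₁ k₁ S₂ k₂ hs (by omega) ht with hx' | hy'
        · simp [hx' x hx]
        · simp [hy' y hy]
    rw [defect_apply, hdc, map_zero, sub_zero] at hdefect
    obtain ⟨e, he, hce⟩ := ih (fun S₁ k₁ S₂ k₂ hs hs' ht =>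
      hvanish S₁ k₁ S₂ k₂ hs hs' (ht.trans t.lt_succ_self)) hdefect
      (by rw [map_sub, hdc, boundary_boundary, sub_zero])
    refine ⟨extendHomotopy M h c + e, add_mem ?_ he, by rwa [map_add, ← sub_sub]⟩
    exact tailFiltration_le_chains (extendHomotopy_mem_tailFiltration hh hM hc)

end Perturbation

/-! ### Low degrees -/

section LowDegrees

variable {α : Type*} [LinearOrder α] {R : Type*} [CommRing R]
  {h : BlockChain R α →ₗ[R] BlockChain R α} {M M' : α} {S : Finset α} {k : ℕ}

variable (R) in
/-- Adjoining the letter `M` to the last block of every word (as a new block to the empty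
word). -/
noncomputable def adjoin (M : α) : BlockChain R α →ₗ[R] BlockChain R α :=
  lmapDomain R R (attach {M})

@[simp] lemma adjoin_single (L : List (Finset α)) (r : R) :
    adjoin R M (single L r) = single (attach {M} L) r := by simp [adjoin]

lemma join_single_nil_right (x : BlockChain R α) :
    join R {M} x (single [] 1) = adjoin R M x :=
  eq_of_eq_on_single (f := (join R {M}).flip (single [] 1)) (fun L => by simp) x

lemma cross_single_singleton_right (x : BlockChain R α) :
    cross R {M} x (single [{M'}] 1) = adjoin R M (adjoin R M' x) :=
  eq_of_eq_on_single (f := (cross R {M}).flip (single [{M'}] 1)) (g := adjoin R M ∘ₗ adjoin R M')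
    (fun L => by simp) x

lemma boundary_adjoin (x : BlockChain R α) :
    boundary R (adjoin R M x) = adjoin R M (boundary R x) := by
  refine eq_of_eq_on_single (f := boundary R ∘ₗ adjoin R M) (g := adjoin R M ∘ₗ boundary R)
    (fun L => ?_) x
  simpa [join_single_nil_right] using boundaryWord_attach_append (R := R) {M} L []

lemma adjoin_mem_chains (hM : M ∉ S) {x : BlockChain R α} (hx : x ∈ chains R S k) :
    adjoin R M x ∈ chains R (insert M S) (max k 1) := by
  refine map_mem_of_mem_supported (fun L hL => ?_) hx
  obtain ⟨hL, rfl, rfl⟩ := hL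
  rw [adjoin_single]
  exact single_mem_chains ⟨isDescentWord_attach (by simp) hL (by simpa using hM),
    by rw [letters_attach, Finset.union_singleton], length_attach _ _⟩ 1

lemma eq_zero_of_adjoin_eq_zero (hM : M ∉ S) {x : BlockChain R α} (hx : x ∈ chains R S k)
    (h : adjoin R M x = 0) : x = 0 := by
  have hsplit : lmapDomain R R (fun L => (splitAtLetter M L).1) (adjoin R M x) = x := by
    refine eqOn_supported (f := lmapDomain R R (fun L => (splitAtLetter M L).1) ∘ₗ adjoin R M)
      (g := LinearMap.id) (fun L hL => ?_) hx
    have hL' := splitAtLetter_attach_append hL.1 (hL.2.1 ▸ hM) []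
    rw [List.append_nil] at hL'
    simp [hL']
  rw [← hsplit, h, map_zero]

/-- The degree of a word before adjoining a letter is determined by the letters and the degree
afterwards. -/
lemma exists_chains_le (hk : 1 ≤ k) :
    ∃ k', max k' 1 = k ∧ (S.Nonempty → k' = k) ∧
      ∀ k₁, max k₁ 1 = k → chains R S k₁ ≤ chains R S k' := by
  rcases S.eq_empty_or_nonempty with rfl | hS
  · refine ⟨if k = 1 then 0 else k, by split_ifs <;> omega, by simp, fun k₁ hk₁ x hx => ?_⟩
    rcases eq_or_ne k₁ 0 with rfl | hk₁'
    · obtain rfl : k = 1 := hk₁.symm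
      exact hx
    · simp [eq_zero_of_mem_chains_empty hk₁' hx]
  · refine ⟨k, max_eq_left hk, fun _ => rfl, fun k₁ hk₁ x hx => ?_⟩
    rcases k₁.eq_zero_or_pos with rfl | hk₁'
    · simp [eq_zero_of_mem_chains_zero hS hx]
    · rwa [← hk₁, max_eq_left hk₁']

lemma exists_adjoin_eq (hM : ∀ a ∈ S, a < M) (hk : 1 ≤ k) {c : BlockChain R α}
    (hc : c ∈ tailFiltration R M S k 1) (hdc : boundary R c = 0) :
    ∃ k', max k' 1 = k ∧ (S.Nonempty → k' = k) ∧
      ∃ c' ∈ chains R S k', boundary R c' = 0 ∧ adjoin R M c' = c := by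
  have hMS : M ∉ S := fun h => (hM M h).false
  obtain ⟨k', hk', hkS, hle⟩ := exists_chains_le (R := R) (S := S) hk
  obtain ⟨c', hc', rfl⟩ : c ∈ (chains R S k').map (adjoin R M) := by
    refine map_mem_of_mem_tailFiltration (f := LinearMap.id) hM
      (fun S₁ k₁ S₂ k₂ hs ht x hx y hy => ?_) hc
    obtain rfl : S₂ = ∅ := Finset.card_eq_zero.1 (Nat.lt_one_iff.1 ht)
    rcases eq_or_ne k₂ 0 with rfl | hk₂
    · refine map_mem_of_mem_supported (f := join R {M} x) (fun Y hY => ?_) hy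
      obtain rfl := eq_nil_of_mem_descentWords_zero hY
      have hx' := hle k₁ hs.degree_eq
      rw [← hs.union_eq, Finset.union_empty] at hx' ⊢
      exact ⟨x, hx' hx, (join_single_nil_right x).symm⟩
    · simp [eq_zero_of_mem_chains_empty hk₂ hy]
  refine ⟨k', hk', hkS, c', hc', ?_, rfl⟩
  cases k' with
  | zero => exact boundary_eq_zero_of_mem_chains zero_le_one hc'
  | succ k' =>
    exact eq_zero_of_adjoin_eq_zero hMS (boundary_mem_chains hc') (by rw [← boundary_adjoin, hdc])

lemma exists_boundary_eq_adjoin_adjoin (hM : ∀ a ∈ insert M' S, a < M) (hM' : M' ∉ S)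
    {c : BlockChain R α} (hc : c ∈ chains R S k) (hdc : boundary R c = 0) :
    ∃ e ∈ chains R (insert M (insert M' S)) (max k 1 + 1),
      boundary R e = adjoin R M (adjoin R M' c) := by
  have hword : [{M'}] ∈ descentWords ({M'} : Finset α) 1 :=
    ⟨isDescentWord_singleton.2 (by simp), by simp, rfl⟩
  have hsplit : IsSplitting (insert M' S) (max k 1 + 1) S k {M'} 1 :=
    ⟨by simpa using hM', by rw [Finset.union_singleton], rfl⟩
  have hjoin := tailFiltration_le_chains
    (join_mem_tailFiltration hM hsplit (Nat.lt_succ_self _) hc (single_mem_chains hword (1 : R)))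
  refine ⟨-((-1 : R) ^ max k 1 • join R {M} c (single [{M'}] 1)),
    neg_mem (Submodule.smul_mem _ _ hjoin), ?_⟩
  rw [map_neg, map_smul, boundary_join {M} hc, hdc, cross_single_singleton_right]
  simp [smul_smul, ← mul_pow]

/-- Below degree `(#S + 3) / 3` every cycle on `insert M S` is homologous to a cycle all of whose
words end with the block of `M`: for each way of distributing the other letters over the two
sides of that block, one side has low degree. -/
lemma exists_homologous_adjoin (hh : RaisesDegree h) (hM : ∀ a ∈ S, a < M)
    (hvanish : ∀ T ⊆ S, T.Nonempty → ∀ j, 3 * j ≤ T.card + 1 → ∀ x ∈ chains R T j, defect h x = 0)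
    (hk : 1 ≤ k) (hkS : 3 * k ≤ S.card + 3) {c : BlockChain R α}
    (hc : c ∈ chains R (insert M S) k) (hdc : boundary R c = 0) :
    ∃ k', max k' 1 = k ∧ (S.Nonempty → k' = k) ∧ ∃ c' ∈ chains R S k', boundary R c' = 0 ∧
      ∃ e ∈ chains R (insert M S) (k + 1), c = adjoin R M c' + boundary R e := by
  have hsides : ∀ S₁ k₁ S₂ k₂, IsSplitting S k S₁ k₁ S₂ k₂ → 1 ≤ S₂.card → S₂.card < S.card + 1 →
      (∀ x ∈ chains R S₁ k₁, defect h x = 0) ∨ ∀ y ∈ chains R S₂ k₂, defect h y = 0 := by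
    intro S₁ k₁ S₂ k₂ hs hS₂ _
    have hcard := hs.card_eq
    have hdeg := hs.degree_eq
    by_cases hk₂ : 3 * k₂ ≤ S₂.card + 1
    · exact .inr (hvanish S₂ hs.subset_right (Finset.card_pos.1 hS₂) k₂ hk₂)
    · exact .inl (hvanish S₁ hs.subset_left (Finset.card_pos.1 (by omega)) k₁ (by omega))
  obtain ⟨e, he, hce⟩ :=
    exists_homologous_mem_tailFiltration hh hM hsides (chains_le_tailFiltration hM hc) hdc
  obtain ⟨k', hk', hkS, c', hc', hdc', hcc'⟩ := exists_adjoin_eq hM hk hce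
    (by rw [map_sub, hdc, boundary_boundary, sub_zero])
  exact ⟨k', hk', hkS, c', hc', hdc', e, he, by rw [hcc', sub_add_cancel]⟩

lemma exists_max_insert_eq (hS : S.Nonempty) :
    ∃ M T, M ∉ T ∧ insert M T = S ∧ ∀ a ∈ T, a < M :=
  ⟨S.max' hS, S.erase (S.max' hS), Finset.notMem_erase _ _, Finset.insert_erase (S.max'_mem hS),
    fun _ ha => Finset.lt_max'_of_mem_erase_max' S hS ha⟩

/-- A low degree cycle is homologous to one obtained from a smaller cycle by adjoining the two
largest letters to the last block; cutting that block between them bounds the latter. -/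
theorem exactAt_of_three_mul_le {K : Type*} [Field K] (hS : S.Nonempty)
    (hk : 3 * k ≤ S.card + 1) : ExactAt K S k := by
  obtain ⟨h, hh, hh'⟩ := exists_contractingHomotopy (α := α) (K := K)
  induction S using Finset.strongInduction generalizing k with
  | H S ih =>
  intro c hc hdc
  rcases k.eq_zero_or_pos with rfl | hkpos
  · exact ⟨0, zero_mem _, by rw [eq_zero_of_mem_chains_zero hS hc, map_zero]⟩
  obtain ⟨M, T, hMT, rfl, hM⟩ := exists_max_insert_eq hS
  rw [Finset.card_insert_of_notMem hMT] at hk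
  have hT : T.Nonempty := Finset.card_pos.1 (by omega)
  have hvanish : ∀ U ⊆ T, U.Nonempty → ∀ j, 3 * j ≤ U.card + 1 →
      ∀ x ∈ chains K U j, defect h x = 0 := fun U hU hUne j hj =>
    hh' U j (ih U (hU.trans_ssubset (Finset.ssubset_insert hMT)) hUne hj)
  obtain ⟨k', -, hkT, c', hc', hdc', e, he, rfl⟩ :=
    exists_homologous_adjoin hh hM hvanish hkpos (by omega) hc hdc
  obtain rfl := hkT hT
  obtain ⟨M', U, hMU, rfl, hM'⟩ := exists_max_insert_eq hT
  rw [Finset.card_insert_of_notMem hMU] at hk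
  obtain ⟨k'', hk'', -, c'', hc'', hdc'', e', he', rfl⟩ := exists_homologous_adjoin hh hM'
    (fun V hV => hvanish V (hV.trans (Finset.subset_insert _ _))) hkpos (by omega) hc' hdc'
  obtain ⟨g, hg, hdg⟩ := exists_boundary_eq_adjoin_adjoin hM hMU hc'' hdc''
  rw [hk''] at hg
  have he'' := adjoin_mem_chains hMT he'
  rw [max_eq_left (Nat.le_add_left 1 k')] at he''
  exact ⟨g + adjoin K M e' + e, add_mem (add_mem hg he'') he, by
    rw [map_add, map_add, boundary_adjoin, hdg, map_add]⟩

end LowDegrees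

/-! ### High degrees -/

section RemoveHead

variable {α R : Type*} [CommRing R]

variable (R) in
/-- The part of a chain supported on the words that begin with the block `E`, with that block
removed. -/
noncomputable def removeHead (E : Finset α) : BlockChain R α →ₗ[R] BlockChain R α :=
  lcomapDomain (E :: ·) List.cons_injective

lemma removeHead_apply (E : Finset α) (x : BlockChain R α) (L : List (Finset α)) :
    removeHead R E x L = x (E :: L) := rfl

@[simp] lemma removeHead_consBlock [DecidableEq α] (E B : Finset α) (x : BlockChain R α) :
    removeHead R E (consBlock R B x) = if B = E then x else 0 := by
  ext L
  rw [removeHead_apply]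
  split_ifs with hBE
  · rw [hBE, consBlock_apply_cons]
  · by_contra hne
    obtain ⟨L', hL', -⟩ := exists_of_consBlock_apply_ne_zero hne
    exact hBE (List.cons_eq_cons.1 hL').1.symm

@[simp] lemma removeHead_single_cons [DecidableEq α] (E B : Finset α) (L : List (Finset α))
    (r : R) : removeHead R E (single (B :: L) r) = if B = E then single L r else 0 := by
  rw [← consBlock_single, removeHead_consBlock]

@[simp] lemma removeHead_single_nil (E : Finset α) (r : R) :
    removeHead R E (single [] r) = 0 := by
  ext L
  simp [removeHead_apply]

end RemoveHead

section HighDegrees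

variable {α : Type*} [LinearOrder α] {R : Type*} [CommRing R]
  {h : BlockChain R α →ₗ[R] BlockChain R α} {M M' : α} {S : Finset α} {k : ℕ}

lemma removeHead_mem_chains (E : Finset α) {x : BlockChain R α} (hx : x ∈ chains R S (k + 1)) :
    removeHead R E x ∈ chains R (S \ E) k := by
  rw [mem_chains] at hx ⊢
  intro L hL
  obtain ⟨hEL, rfl, hlen⟩ := hx (E :: L) hL
  obtain ⟨-, hdis, -, hL⟩ := isDescentWord_cons.1 hEL
  refine ⟨hL, ?_, Nat.succ_injective hlen⟩
  rw [letters_cons, Finset.union_sdiff_left, Finset.sdiff_eq_self_of_disjoint hdis.symm]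

lemma union_ne_singleton {B C : Finset α} (hB : B.Nonempty) (hC : C.Nonempty)
    (hd : Disjoint B C) (a : α) : B ∪ C ≠ {a} := by
  intro h
  have hcard := congrArg Finset.card h
  rw [Finset.card_union_of_disjoint hd, Finset.card_singleton] at hcard
  have := hB.card_pos
  have := hC.card_pos
  omega

lemma union_eq_pair_iff {B C : Finset α} (hdesc : Descends B C) (hd : Disjoint B C) {r t : α}
    (htr : t < r) : B ∪ C = {r, t} ↔ B = {r} ∧ C = {t} := by
  refine ⟨fun h => ?_, by rintro ⟨rfl, rfl⟩; rfl⟩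
  obtain ⟨a, ha, c, hc, hca⟩ := hdesc
  have haB : a ∈ ({r, t} : Finset α) := h ▸ Finset.mem_union_left _ ha
  have hcC : c ∈ ({r, t} : Finset α) := h ▸ Finset.mem_union_right _ hc
  have hcard := congrArg Finset.card h
  rw [Finset.card_union_of_disjoint hd, Finset.card_pair htr.ne'] at hcard
  have hB := Finset.card_pos.2 ⟨a, ha⟩
  have hC := Finset.card_pos.2 ⟨c, hc⟩
  obtain ⟨b, rfl⟩ := Finset.card_eq_one.1 (show B.card = 1 by omega)
  obtain ⟨d, rfl⟩ := Finset.card_eq_one.1 (show C.card = 1 by omega)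
  simp only [Finset.mem_singleton] at ha hc
  subst ha hc
  simp only [Finset.mem_insert, Finset.mem_singleton] at haB hcC
  grind

lemma removeHead_boundary {x : BlockChain R α} (hx : x ∈ chains R S k) :
    removeHead R {M} (boundary R x) = -boundary R (removeHead R {M} x) := by
  refine eqOn_supported (f := removeHead R {M} ∘ₗ boundary R)
    (g := -(boundary R ∘ₗ removeHead R {M})) (fun L hL => ?_) hx
  cases L with
  | nil => simp
  | cons B L =>
    obtain ⟨hB, hBL, -, hL⟩ := isDescentWord_cons.1 hL.1
    have hmerge : removeHead R {M} (mergeHeadWord R B L) = 0 := by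
      cases L with
      | nil => simp
      | cons C L =>
        rw [mergeHeadWord_cons, removeHead_single_cons, if_neg]
        exact union_ne_singleton hB (isDescentWord_cons.1 hL).1
          (Finset.disjoint_union_right.1 hBL).1 M
    simp only [LinearMap.comp_apply, LinearMap.neg_apply, boundary_single, one_smul,
      boundaryWord_cons, map_sub, hmerge, removeHead_consBlock, removeHead_single_cons]
    split_ifs <;> simp

/-- The only way to cut the block `{M, M'}` in two is `{M}` followed by `{M'}`. -/
lemma removeHead_removeHead (hMM : M' < M) {x : BlockChain R α} (hx : x ∈ chains R S k) :
    removeHead R {M'} (removeHead R {M} x) =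
      boundary R (removeHead R {M, M'} x) + removeHead R {M, M'} (boundary R x) := by
  refine eqOn_supported (f := removeHead R {M'} ∘ₗ removeHead R {M})
    (g := boundary R ∘ₗ removeHead R {M, M'} + removeHead R {M, M'} ∘ₗ boundary R)
    (fun L hL => ?_) hx
  cases L with
  | nil => simp
  | cons B L =>
    obtain ⟨-, hBL, hdesc, -⟩ := isDescentWord_cons.1 hL.1
    have hmerge : removeHead R {M, M'} (mergeHeadWord R B L) =
        removeHead R {M'} (removeHead R {M} (single (B :: L) 1)) := by
      cases L with
      | nil => simp [apply_ite]
      | cons C L =>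
        have hpair := union_eq_pair_iff (hdesc C rfl) (Finset.disjoint_union_right.1 hBL).1 hMM
        rw [mergeHeadWord_cons, removeHead_single_cons, removeHead_single_cons, apply_ite
          (removeHead R {M'}), removeHead_single_cons, map_zero, ← ite_and, if_congr hpair rfl rfl]
    simp only [LinearMap.comp_apply, LinearMap.add_apply, boundary_single, one_smul,
      boundaryWord_cons, map_sub, hmerge, removeHead_consBlock, removeHead_single_cons]
    split_ifs <;> simp

lemma mem_tailFiltration_of_removeHead_eq_zero (hM : ∀ a ∈ S, a < M) {c : BlockChain R α}
    (hc : c ∈ chains R (insert M S) k) (hrem : removeHead R {M} c = 0) :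
    c ∈ tailFiltration R M S k S.card := by
  rw [mem_chains] at hc
  intro L hL
  have hcL : c L ≠ 0 := mem_support_iff.1 hL
  obtain ⟨S₁, k₁, S₂, k₂, X, Y, hs, hX, hY, hpair, rfl⟩ :=
    exists_eq_attach_append_of_mem_descentWords hM (hc L hcL)
  refine ⟨hc _ hcL, ?_⟩
  rw [hpair, hY.2.1, ← hs.card_eq]
  refine lt_add_of_pos_left _ (Finset.card_pos.2 (Finset.nonempty_iff_ne_empty.2 ?_))
  rintro rfl
  rw [hX.1.eq_nil hX.2.1, attach_nil, List.singleton_append, ← removeHead_apply, hrem] at hcL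
  exact hcL rfl

/-- If no word of the cycle begins with the block `{M}`, then for each way of distributing the
other letters over the two sides of the block of `M`, one side has high degree. -/
lemma exists_boundary_eq_of_removeHead_eq_zero (hh : RaisesDegree h) (hM : ∀ a ∈ S, a < M)
    (hvanish : ∀ T ⊆ S, ∀ j, 2 * T.card + 2 ≤ 3 * j → ∀ x ∈ chains R T j, defect h x = 0)
    (hk : 2 * S.card + 3 ≤ 3 * k) {c : BlockChain R α} (hc : c ∈ chains R (insert M S) k)
    (hdc : boundary R c = 0) (hrem : removeHead R {M} c = 0) :
    ∃ e ∈ chains R (insert M S) (k + 1), boundary R e = c := by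
  have hsides : ∀ S₁ k₁ S₂ k₂, IsSplitting S k S₁ k₁ S₂ k₂ → 0 ≤ S₂.card → S₂.card < S.card →
      (∀ x ∈ chains R S₁ k₁, defect h x = 0) ∨ ∀ y ∈ chains R S₂ k₂, defect h y = 0 := by
    intro S₁ k₁ S₂ k₂ hs _ hS₂
    have hcard := hs.card_eq
    have hdeg := hs.degree_eq
    by_cases hk₂ : 2 * S₂.card + 2 ≤ 3 * k₂
    · exact .inr (hvanish S₂ hs.subset_right k₂ hk₂)
    · refine .inl fun x hx => ?_
      by_cases hk₁ : k₁ = 0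
      · subst hk₁
        rw [eq_zero_of_mem_chains_zero (Finset.card_pos.1 (by omega)) hx, map_zero]
      · exact hvanish S₁ hs.subset_left k₁ (by omega) x hx
  obtain ⟨e, he, hce⟩ := exists_homologous_mem_tailFiltration hh hM hsides
    (mem_tailFiltration_of_removeHead_eq_zero hM hc hrem) hdc
  exact ⟨e, he, (sub_eq_zero.1 (eq_zero_of_mem_tailFiltration_zero hce)).symm⟩

lemma exists_boundary_eq_of_removeHead_eq_boundary (hh : RaisesDegree h) (hM : ∀ a ∈ S, a < M)
    (hvanish : ∀ T ⊆ S, ∀ j, 2 * T.card + 2 ≤ 3 * j → ∀ x ∈ chains R T j, defect h x = 0)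
    (hk : 2 * S.card + 3 ≤ 3 * k) {c e : BlockChain R α} (hc : c ∈ chains R (insert M S) k)
    (hdc : boundary R c = 0) (he : e ∈ chains R S k) (hce : removeHead R {M} c = boundary R e) :
    ∃ e' ∈ chains R (insert M S) (k + 1), boundary R e' = c := by
  have hcons := consBlock_singleton_mem_chains hM he
  obtain ⟨e', he', hde'⟩ := exists_boundary_eq_of_removeHead_eq_zero hh hM hvanish hk
    (add_mem hc (boundary_mem_chains hcons)) (by rw [map_add, hdc, boundary_boundary, add_zero])
    (by rw [map_add, removeHead_boundary hcons, hce, removeHead_consBlock, if_pos rfl,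
      add_neg_cancel])
  exact ⟨e' - consBlock R {M} e, sub_mem he' hcons, by rw [map_sub, hde', add_sub_cancel_right]⟩

/-- By `removeHead_removeHead` the part of a cycle beginning with its largest letter is a cycle
satisfying the hypothesis of `exists_boundary_eq_of_removeHead_eq_boundary`, hence a boundary, and
that lemma applies again. -/
theorem exactAt_of_two_mul_add_two_le {K : Type*} [Field K] (hk : 2 * S.card + 2 ≤ 3 * k) :
    ExactAt K S k := by
  obtain ⟨h, hh, hh'⟩ := exists_contractingHomotopy (α := α) (K := K)
  induction S using Finset.strongInduction generalizing k with
  | H S ih =>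
  intro c hc hdc
  rcases S.eq_empty_or_nonempty with rfl | hS
  · exact ⟨0, zero_mem _, by rw [eq_zero_of_mem_chains_empty (by omega) hc, map_zero]⟩
  obtain ⟨M, T, hMT, rfl, hM⟩ := exists_max_insert_eq hS
  rw [Finset.card_insert_of_notMem hMT] at hk
  obtain ⟨k, rfl⟩ : ∃ j, k = j + 1 := ⟨k - 1, by omega⟩
  have hvanish : ∀ U ⊆ T, ∀ j, 2 * U.card + 2 ≤ 3 * j → ∀ x ∈ chains K U j, defect h x = 0 :=
    fun U hU j hj => hh' U j (ih U (hU.trans_ssubset (Finset.ssubset_insert hMT)) hj)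
  suffices ∃ e ∈ chains K T (k + 1), boundary K e = removeHead K {M} c by
    obtain ⟨e, he, hde⟩ := this
    exact exists_boundary_eq_of_removeHead_eq_boundary hh hM hvanish (by omega) hc hdc he hde.symm
  have hv : removeHead K {M} c ∈ chains K T k := by
    simpa [Finset.sdiff_singleton_eq_erase, hMT] using removeHead_mem_chains {M} hc
  have hdv : boundary K (removeHead K {M} c) = 0 := by
    rw [← neg_eq_zero, ← removeHead_boundary hc, hdc, map_zero]
  rcases T.eq_empty_or_nonempty with rfl | hT
  · exact ⟨0, zero_mem _, by rw [eq_zero_of_mem_chains_empty (by omega) hv, map_zero]⟩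
  obtain ⟨M', U, hMU, rfl, hM'⟩ := exists_max_insert_eq hT
  rw [Finset.card_insert_of_notMem hMU] at hk
  have hw : removeHead K {M, M'} c ∈ chains K U k := by
    have hU : insert M (insert M' U) \ {M, M'} = U := by grind
    simpa only [hU] using removeHead_mem_chains {M, M'} hc
  refine exists_boundary_eq_of_removeHead_eq_boundary hh hM'
    (fun V hV => hvanish V (hV.trans (Finset.subset_insert _ _))) (by omega) hv hdv hw ?_
  rw [removeHead_removeHead (hM M' (Finset.mem_insert_self _ _)) hc, hdc, map_zero, add_zero]

end HighDegrees

/-! ### Nonvanishing -/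

section Nonvanishing

variable {α : Type*} [LinearOrder α] {R : Type*} [CommRing R] {S : Finset α} {k : ℕ}

/-- No descent word becomes `L` by merging two adjacent blocks, so `L` has coefficient zero in every
boundary. -/
def Unrefinable (L : List (Finset α)) : Prop := ∀ G, IsDescentWord G → ¬ Merges G L

variable (R) in
/-- There is a cycle that fails to bound because an unrefinable word occurs in it. -/
def HasEssentialCycle (S : Finset α) (k : ℕ) : Prop :=
  ∃ z ∈ chains R S k, boundary R z = 0 ∧ ∃ L, z L ≠ 0 ∧ Unrefinable L

lemma HasEssentialCycle.not_exactAt (h : HasEssentialCycle R S k) : ¬ ExactAt R S k := by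
  obtain ⟨z, hz, hdz, L, hL, hunref⟩ := h
  intro hexact
  obtain ⟨e, he, rfl⟩ := hexact z hz hdz
  refine hL (eqOn_supported (f := lapply L ∘ₗ boundary R) (g := 0) (fun G hG => ?_) he)
  by_contra hne
  exact hunref G hG.1 (merges_of_boundaryWord_apply_ne_zero (R := R) (by simpa using hne))

lemma merges_cons_iff {G L : List (Finset α)} {E : Finset α} :
    Merges G (E :: L) ↔
      (∃ B C, B ∪ C = E ∧ G = B :: C :: L) ∨ ∃ G', G = E :: G' ∧ Merges G' L := by
  constructor
  · rintro (⟨B, C, _⟩ | ⟨_, h⟩)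
    exacts [.inl ⟨B, C, rfl, rfl⟩, .inr ⟨_, rfl, h⟩]
  · rintro (⟨B, C, rfl, rfl⟩ | ⟨G', rfl, h⟩)
    exacts [.head B C L, .cons E h]

lemma unrefinable_nil : Unrefinable ([] : List (Finset α)) := fun _ _ h => nomatch h

lemma Unrefinable.singleton_cons {L : List (Finset α)} (hL : Unrefinable L) (a : α) :
    Unrefinable ({a} :: L) := by
  intro G hG hmerge
  rcases merges_cons_iff.1 hmerge with ⟨B, C, hBC, rfl⟩ | ⟨G, rfl, hGL⟩
  · obtain ⟨hB, hBC', -, hCL⟩ := isDescentWord_cons.1 hG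
    exact union_ne_singleton hB (isDescentWord_cons.1 hCL).1
      (Finset.disjoint_union_right.1 hBC').1 a hBC
  · exact hL G (isDescentWord_cons.1 hG).2.2.2 hGL

lemma unrefinable_pair_cons {r t : α} (hrt : r < t) {L : List (Finset α)}
    (hr : ∃ C ∈ L.head?, ¬ Descends {r} C)
    (htail : ∀ G, IsDescentWord ({t, r} :: G) → ¬ Merges G L) : Unrefinable ({t, r} :: L) := by
  intro G hG hmerge
  rcases merges_cons_iff.1 hmerge with ⟨B, C, hBC, rfl⟩ | ⟨G, rfl, hGL⟩
  · obtain ⟨-, hBC', hdesc, hCL⟩ := isDescentWord_cons.1 hG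
    obtain ⟨-, rfl⟩ := (union_eq_pair_iff (hdesc C rfl)
      (Finset.disjoint_union_right.1 hBC').1 hrt).1 hBC
    obtain ⟨E, hE, hrE⟩ := hr
    exact hrE ((isDescentWord_cons.1 hCL).2.2.1 E hE)
  · exact htail G hG hGL

lemma exists_of_mergeHead_apply_ne_zero {B : Finset α} {x : BlockChain R α}
    {F : List (Finset α)} (h : mergeHead R B x F ≠ 0) :
    ∃ C L, F = (B ∪ C) :: L ∧ x (C :: L) ≠ 0 := by
  have hmem : mergeHead R B x ∈ supported R R {F | ∃ C L, F = (B ∪ C) :: L ∧ x (C :: L) ≠ 0} := by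
    refine map_mem_of_mem_supported (A := x.support) (fun G hG => ?_) (fun _ h => h)
    cases G with
    | nil => simp
    | cons C L =>
      rw [mergeHead_single, one_smul, mergeHeadWord_cons]
      exact single_mem_supported R 1 ⟨C, L, rfl, mem_support_iff.1 hG⟩
  exact hmem (mem_support_iff.2 h)

lemma mergeHead_mem_chains {B : Finset α} (hBS : Disjoint B S) {x : BlockChain R α}
    (hx : x ∈ chains R S k) : mergeHead R B x ∈ chains R (B ∪ S) k := by
  rw [mem_chains] at hx ⊢
  intro F hF
  obtain ⟨C, L, rfl, hL⟩ := exists_of_mergeHead_apply_ne_zero hF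
  obtain ⟨hdw, rfl, rfl⟩ := hx _ hL
  obtain ⟨hC, hCL, hdesc, hL⟩ := isDescentWord_cons.1 hdw
  rw [letters_cons, Finset.disjoint_union_right] at hBS
  exact ⟨isDescentWord_cons.2 ⟨hC.mono Finset.subset_union_right,
    Finset.disjoint_union_left.2 ⟨hBS.2, hCL⟩,
    fun E hE => (hdesc E hE).mono Finset.subset_union_right subset_rfl, hL⟩,
    Finset.union_assoc B C _, rfl⟩

lemma mergeHead_singleton_apply {b : α} (hb : b ∉ S) {x : BlockChain R α}
    (hx : x ∈ chains R S k) {C : Finset α} (hC : b ∉ C) (L : List (Finset α)) :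
    mergeHead R {b} x (({b} ∪ C) :: L) = x (C :: L) := by
  refine eqOn_supported (f := lapply (({b} ∪ C) :: L) ∘ₗ mergeHead R {b})
    (g := lapply (C :: L)) (fun G hG => ?_) hx
  cases G with
  | nil => simp
  | cons E G =>
    have hbE : b ∉ E := fun h => hb (hG.2.1 ▸ Finset.mem_union_left _ h)
    have heq : insert b E = insert b C ↔ E = C := by
      refine ⟨fun h => ?_, congrArg (insert b)⟩
      rw [← Finset.erase_insert hbE, h, Finset.erase_insert hC]
    simp [single_apply, heq]

lemma boundary_consBlock_consBlock (B C : Finset α) (y : BlockChain R α) :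
    boundary R (consBlock R B (consBlock R C y)) = consBlock R (B ∪ C) y
      - consBlock R B (mergeHead R C y) + consBlock R B (consBlock R C (boundary R y)) := by
  rw [boundary_consBlock, mergeHead_consBlock, boundary_consBlock, map_sub, sub_sub_eq_add_sub]
  abel

lemma boundary_consBlock_consBlock_mem_chains {r t : α} (hrt : r < t) (hS : Disjoint {t, r} S)
    {y : BlockChain R α} (hy : y ∈ chains R S k)
    (hhead : ∀ L, y L ≠ 0 → ∀ C ∈ L.head?, Descends {t} C)
    (hdy : consBlock R {r} (boundary R y) ∈ chains R ({r} ∪ S) k) :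
    boundary R (consBlock R {t} (consBlock R {r} y)) ∈ chains R ({t, r} ∪ S) (k + 1) := by
  have hr : Disjoint {r} S := hS.mono_left (by simp)
  have ht : Disjoint {t} ({r} ∪ S) := by
    rw [Finset.disjoint_union_right]
    exact ⟨by simpa using hrt.ne', hS.mono_left (by simp)⟩
  have hrt' {C : Finset α} (hC : r ∈ C) : Descends {t} C :=
    ⟨t, Finset.mem_singleton_self t, r, hC, hrt⟩
  have hassoc : ({t, r} ∪ S : Finset α) = {t} ∪ ({r} ∪ S) := Finset.union_assoc {t} {r} S
  rw [boundary_consBlock_consBlock]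
  refine add_mem (sub_mem ?_ ?_) ?_
  · exact consBlock_mem_chains (Finset.insert_nonempty t {r}) hS hy
      fun L hL C hC => (hhead L hL C hC).mono (by simp) subset_rfl
  · rw [hassoc]
    refine consBlock_mem_chains (Finset.singleton_nonempty t) ht (mergeHead_mem_chains hr hy) ?_
    intro F hF E hE
    obtain ⟨C, L, rfl, -⟩ := exists_of_mergeHead_apply_ne_zero hF
    obtain rfl : {r} ∪ C = E := by simpa using hE
    exact hrt' (by simp)
  · rw [hassoc]
    refine consBlock_mem_chains (Finset.singleton_nonempty t) ht hdy ?_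
    intro F hF E hE
    obtain ⟨L, rfl, -⟩ := exists_of_consBlock_apply_ne_zero hF
    obtain rfl : {r} = E := by simpa using hE
    exact hrt' (by simp)

lemma boundary_consBlock_consBlock_apply {r t : α} (hrt : r ≠ t) (y : BlockChain R α)
    (L : List (Finset α)) :
    boundary R (consBlock R {t} (consBlock R {r} y)) ({t, r} :: L) = y L := by
  have hne : ({t} : Finset α) ≠ {t, r} := fun h =>
    hrt (Finset.mem_singleton.1 (h ▸ Finset.mem_insert_of_mem (Finset.mem_singleton_self r)))
  rw [boundary_consBlock_consBlock, ← removeHead_apply]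
  simp [hne]

/-- The word chain `{t}{r} y` need not consist of descent words, but its boundary, automatically a
cycle, does. -/
lemma hasEssentialCycle_pair {r t : α} (hrt : r < t) (hS : Disjoint {t, r} S)
    {y : BlockChain R α} (hy : y ∈ chains R S k)
    (hhead : ∀ L, y L ≠ 0 → ∀ C ∈ L.head?, Descends {t} C)
    (hdy : consBlock R {r} (boundary R y) ∈ chains R ({r} ∪ S) k)
    {L : List (Finset α)} (hL : y L ≠ 0) (hr : ∃ C ∈ L.head?, ¬ Descends {r} C)
    (htail : ∀ G, IsDescentWord ({t, r} :: G) → ¬ Merges G L) :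
    HasEssentialCycle R ({t, r} ∪ S) (k + 1) :=
  ⟨_, boundary_consBlock_consBlock_mem_chains hrt hS hy hhead hdy, boundary_boundary _,
    {t, r} :: L, by rwa [boundary_consBlock_consBlock_apply hrt.ne],
    unrefinable_pair_cons hrt hr htail⟩

lemma exists_mem_head?_of_mem_descentWords (hS : S.Nonempty) {L : List (Finset α)}
    (hL : L ∈ descentWords S k) : ∃ C ∈ L.head?, C ⊆ S := by
  cases L with
  | nil => exact absurd hL.2.1.symm hS.ne_empty
  | cons C L => exact ⟨C, rfl, hL.2.1 ▸ Finset.subset_union_left⟩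

lemma not_descends_singleton {r : α} {C : Finset α} (hr : ∀ c ∈ C, r < c) : ¬ Descends {r} C := by
  rintro ⟨a, ha, c, hc, hca⟩
  rw [Finset.mem_singleton.1 ha] at hca
  exact hca.asymm (hr c hc)

namespace HasEssentialCycle

lemma insert_max_insert_min (h : HasEssentialCycle R S k) (hS : S.Nonempty) {r t : α}
    (hr : ∀ a ∈ S, r < a) (ht : ∀ a ∈ S, a < t) :
    HasEssentialCycle R (insert t (insert r S)) (k + 1) := by
  obtain ⟨z, hz, hdz, L, hL, hunref⟩ := h
  obtain ⟨s, hs⟩ := id hS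
  obtain ⟨C, hCL, hCS⟩ := exists_mem_head?_of_mem_descentWords hS (mem_chains.1 hz L hL)
  have hdis : Disjoint {t, r} S := by
    rw [Finset.disjoint_insert_left, Finset.disjoint_singleton_left]
    exact ⟨fun h => (ht t h).false, fun h => (hr r h).false⟩
  have hcycle := hasEssentialCycle_pair ((hr s hs).trans (ht s hs)) hdis hz
    (fun L hL => descends_head_of_mem_descentWords (mem_chains.1 hz L hL) ht)
    (by rw [hdz, map_zero]; exact zero_mem _) hL
    ⟨C, hCL, not_descends_singleton fun c hc => hr c (hCS hc)⟩
    fun G hG => hunref G (isDescentWord_cons.1 hG).2.2.2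
  simpa only [Finset.insert_union, Finset.singleton_union] using hcycle

lemma insert_three_max (h : HasEssentialCycle R S k) {p q x : α}
    (hp : ∀ a ∈ S, a < p) (hpq : p < q) (hqx : q < x) :
    HasEssentialCycle R (insert x (insert q (insert p S))) (k + 2) := by
  obtain ⟨z, hz, hdz, L, hL, hunref⟩ := h
  have hq : ∀ a ∈ S, a < q := fun a ha => (hp a ha).trans hpq
  have hx : ∀ a ∈ insert q S, a < x :=
    Finset.forall_mem_insert _ _ _ |>.2 ⟨hqx, fun a ha => (hq a ha).trans hqx⟩
  have hpS : p ∉ S := fun h => (hp p h).false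
  have hqS : q ∉ S := fun h => (hq q h).false
  have hdis : Disjoint {x, p} (insert q S) := by
    rw [Finset.disjoint_insert_left, Finset.disjoint_singleton_left]
    exact ⟨fun h => (hx x h).false, by simp [hpq.ne, hpS]⟩
  have hy := consBlock_singleton_mem_chains hq hz
  have hdy : consBlock R {p} (boundary R (consBlock R {q} z)) ∈
      chains R ({p} ∪ insert q S) (k + 1) := by
    rw [boundary_consBlock, hdz, map_zero, sub_zero]
    refine consBlock_mem_chains (Finset.singleton_nonempty p)
      (hdis.mono_left (by simp)) (mergeHead_mem_chains (by simpa using hqS) hz) ?_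
    intro F hF E hE
    obtain ⟨C, L, rfl, hCL⟩ := exists_of_mergeHead_apply_ne_zero hF
    obtain rfl : {q} ∪ C = E := by simpa using hE
    exact (descends_head_of_mem_descentWords (mem_chains.1 hz _ hCL) hp C rfl).mono subset_rfl
      Finset.subset_union_right
  have hcycle := hasEssentialCycle_pair (hpq.trans hqx) hdis hy
    (fun L hL => descends_head_of_mem_descentWords (mem_chains.1 hy L hL) hx) hdy
    (L := {q} :: L) (by rwa [consBlock_apply_cons])
    ⟨{q}, rfl, not_descends_singleton (by simpa using hpq)⟩
    fun G hG => hunref.singleton_cons q G (isDescentWord_cons.1 hG).2.2.2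
  simpa only [Finset.insert_union, Finset.singleton_union, Finset.insert_comm p q] using hcycle

end HasEssentialCycle

lemma isDescentWord_erase_cons {q : α} {B : Finset α} {G : List (Finset α)}
    (hG : IsDescentWord (B :: G)) (hB : (B.erase q).Nonempty) (hq : ∀ c ∈ letters G, q < c) :
    IsDescentWord (B.erase q :: G) := by
  obtain ⟨-, hBG, hdesc, hG⟩ := isDescentWord_cons.1 hG
  refine isDescentWord_cons.2 ⟨hB, hBG.mono_left (Finset.erase_subset q B), fun C hC => ?_, hG⟩
  obtain ⟨a, ha, c, hc, hca⟩ := hdesc C hC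
  have hqc := hq c (mem_letters.2 ⟨C, List.mem_of_mem_head? hC, hc⟩)
  exact ⟨a, Finset.mem_erase.2 ⟨(hqc.trans hca).ne', ha⟩, c, hc, hca⟩

/-- A refinement of `({q} ∪ E) :: L` preceded by `B` has `q` in its first block, hence becomes a
refinement of `E :: L` when `q` is removed. -/
lemma Unrefinable.not_merges_of_isDescentWord_cons {E : Finset α} {L : List (Finset α)}
    (hunref : Unrefinable (E :: L)) (hEL : IsDescentWord (E :: L)) {q : α}
    (hq : ∀ a ∈ letters (E :: L), q < a) {B : Finset α}
    (hB : ∀ b ∈ B, ∀ a ∈ letters (E :: L), b < a) {G : List (Finset α)}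
    (hG : IsDescentWord (B :: G)) : ¬ Merges G (({q} ∪ E) :: L) := by
  obtain ⟨-, -, hdesc, hG⟩ := isDescentWord_cons.1 hG
  have hqE : q ∉ E := fun h => (hq q (Finset.mem_union_left _ h)).false
  have hq' : ∀ c ∈ letters L, q < c := fun c hc => hq c (Finset.mem_union_right _ hc)
  have hE : E.Nonempty := (isDescentWord_cons.1 hEL).1
  intro hmerge
  rcases merges_cons_iff.1 hmerge with ⟨X, Y, hXY, rfl⟩ | ⟨G, rfl, hGL⟩
  · obtain ⟨-, hXYL, hXdesc, -⟩ := isDescentWord_cons.1 hG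
    have hXYdis := (Finset.disjoint_union_right.1 hXYL).1
    have hqX : q ∈ X := by
      obtain ⟨b, hb, c, hc, hcb⟩ := hdesc X rfl
      have hc' : c ∈ {q} ∪ E := hXY ▸ Finset.mem_union_left _ hc
      have := hB b hb c
      grind [letters_cons]
    have hqY : q ∉ Y := Finset.disjoint_left.1 hXYdis hqX
    have hYE : Y ⊆ E := by
      rw [← Finset.subset_insert_iff_of_notMem hqY, Finset.insert_eq, ← hXY]
      exact Finset.subset_union_right
    have hXE : X.erase q ∪ Y = E := by
      rw [← Finset.erase_eq_of_notMem hqY, ← Finset.erase_union_distrib, hXY, ← Finset.insert_eq,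
        Finset.erase_insert hqE]
    obtain ⟨a, ha, c, hc, hca⟩ := hXdesc Y rfl
    have hqa : q < a := (hq c (Finset.mem_union_left _ (hYE hc))).trans hca
    refine hunref (X.erase q :: Y :: L) (isDescentWord_erase_cons hG
      ⟨a, Finset.mem_erase.2 ⟨hqa.ne', ha⟩⟩ fun c hc => ?_) (hXE ▸ .head _ _ L)
    exact hq c (Finset.union_subset_union_left hYE hc)
  · have herase : ({q} ∪ E).erase q = E := by
      rw [← Finset.insert_eq, Finset.erase_insert hqE]
    have hEG := isDescentWord_erase_cons (q := q) hG (by rwa [herase])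
      (by rwa [← hGL.letters_eq])
    rw [herase] at hEG
    exact hunref (E :: G) hEG (.cons E hGL)

lemma HasEssentialCycle.insert_three_min (h : HasEssentialCycle R S k) (hS : S.Nonempty)
    {p q x : α} (hpq : p < q) (hqx : q < x) (hx : ∀ a ∈ S, x < a) :
    HasEssentialCycle R (insert p (insert q (insert x S))) (k + 1) := by
  obtain ⟨z, hz, hdz, L, hL, hunref⟩ := h
  have hLS := mem_chains.1 hz L hL
  obtain ⟨E, hEL, hES⟩ := exists_mem_head?_of_mem_descentWords hS hLS
  obtain ⟨L, rfl⟩ := List.head?_eq_some_iff.1 hEL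
  have hq : ∀ a ∈ S, q < a := fun a ha => hqx.trans (hx a ha)
  have hp : ∀ a ∈ S, p < a := fun a ha => hpq.trans (hq a ha)
  have hqS : q ∉ S := fun h => (hq q h).false
  have hdis : Disjoint {x, p} ({q} ∪ S) := by
    have hxS : x ∉ S := fun h => (hx x h).false
    have hpS : p ∉ S := fun h => (hp p h).false
    simp [hxS, hpS, hqx.ne, hpq.ne']
  have hdy : boundary R (mergeHead R {q} z) = 0 := by rw [boundary_mergeHead, hdz, map_zero]
  have hhead : ∀ F, mergeHead R {q} z F ≠ 0 → ∀ D ∈ F.head?, Descends {x} D := by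
    intro F hF D hD
    obtain ⟨C, L, rfl, -⟩ := exists_of_mergeHead_apply_ne_zero hF
    obtain rfl : {q} ∪ C = D := by simpa using hD
    exact ⟨x, Finset.mem_singleton_self x, q, by simp, hqx⟩
  have hcycle := hasEssentialCycle_pair (hpq.trans hqx) hdis
    (mergeHead_mem_chains (by simpa using hqS) hz) hhead
    (by rw [hdy, map_zero]; exact zero_mem _) (L := ({q} ∪ E) :: L)
    (by rwa [mergeHead_singleton_apply hqS hz fun h => hqS (hES h)])
    ⟨{q} ∪ E, rfl, not_descends_singleton (by grind)⟩
    fun G hG => hunref.not_merges_of_isDescentWord_cons hLS.1 (hLS.2.1.symm ▸ hq)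
      (hLS.2.1.symm ▸ by grind) hG
  rwa [show insert p (insert q (insert x S)) = {x, p} ∪ ({q} ∪ S) by grind]

lemma hasEssentialCycle_singleton [Nontrivial R] (a : α) : HasEssentialCycle R {a} 1 := by
  have hmem : [{a}] ∈ descentWords {a} 1 :=
    ⟨isDescentWord_singleton.2 (Finset.singleton_nonempty a), by simp, rfl⟩
  exact ⟨single [{a}] 1, single_mem_chains hmem 1, by simp, [{a}], by simp,
    unrefinable_nil.singleton_cons a⟩

lemma exists_min_insert_eq (hS : S.Nonempty) :
    ∃ m T, m ∉ T ∧ insert m T = S ∧ ∀ a ∈ T, m < a :=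
  ⟨S.min' hS, S.erase (S.min' hS), Finset.notMem_erase _ _, Finset.insert_erase (S.min'_mem hS),
    fun _ ha => Finset.min'_lt_of_mem_erase_min' S hS ha⟩

lemma exists_three_max_insert_eq (hS : 3 ≤ S.card) :
    ∃ x q p T, insert x (insert q (insert p T)) = S ∧ (∀ a ∈ T, a < p) ∧ p < q ∧ q < x ∧
      T.card + 3 = S.card := by
  obtain ⟨x, S₁, hx₁, rfl, hx⟩ := exists_max_insert_eq (S := S) (Finset.card_pos.1 (by omega))
  rw [Finset.card_insert_of_notMem hx₁] at hS ⊢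
  obtain ⟨q, S₂, hq₂, rfl, hq⟩ := exists_max_insert_eq (S := S₁) (Finset.card_pos.1 (by omega))
  rw [Finset.card_insert_of_notMem hq₂] at hS ⊢
  obtain ⟨p, T, hpT, rfl, hp⟩ := exists_max_insert_eq (S := S₂) (Finset.card_pos.1 (by omega))
  rw [Finset.card_insert_of_notMem hpT]
  exact ⟨x, q, p, T, rfl, hp, hq p (by simp), hx q (by simp), rfl⟩

lemma exists_three_min_insert_eq (hS : 3 ≤ S.card) :
    ∃ p q x T, insert p (insert q (insert x T)) = S ∧ p < q ∧ q < x ∧ (∀ a ∈ T, x < a) ∧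
      T.card + 3 = S.card := by
  obtain ⟨p, S₁, hp₁, rfl, hp⟩ := exists_min_insert_eq (S := S) (Finset.card_pos.1 (by omega))
  rw [Finset.card_insert_of_notMem hp₁] at hS ⊢
  obtain ⟨q, S₂, hq₂, rfl, hq⟩ := exists_min_insert_eq (S := S₁) (Finset.card_pos.1 (by omega))
  rw [Finset.card_insert_of_notMem hq₂] at hS ⊢
  obtain ⟨x, T, hxT, rfl, hx⟩ := exists_min_insert_eq (S := S₂) (Finset.card_pos.1 (by omega))
  rw [Finset.card_insert_of_notMem hxT]
  exact ⟨p, q, x, T, rfl, hp q (by simp), hq x (by simp), hx, rfl⟩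

lemma exists_max_min_insert_eq (hS : 2 ≤ S.card) :
    ∃ t r T, insert t (insert r T) = S ∧ (∀ a ∈ T, r < a) ∧ (∀ a ∈ T, a < t) ∧
      T.card + 2 = S.card := by
  obtain ⟨t, S₁, ht₁, rfl, ht⟩ := exists_max_insert_eq (S := S) (Finset.card_pos.1 (by omega))
  rw [Finset.card_insert_of_notMem ht₁] at hS ⊢
  obtain ⟨r, T, hrT, rfl, hr⟩ := exists_min_insert_eq (S := S₁) (Finset.card_pos.1 (by omega))
  rw [Finset.card_insert_of_notMem hrT]
  exact ⟨t, r, T, rfl, hr, fun a ha => ht a (Finset.mem_insert_of_mem ha), rfl⟩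

theorem hasEssentialCycle_of_le [Nontrivial R] {j : ℕ} (hS : S.card ≤ 3 * j + 1)
    (hj : 3 * j + 2 ≤ 2 * S.card) : HasEssentialCycle R S (j + 1) := by
  induction hn : S.card using Nat.strong_induction_on generalizing S j with
  | h n ih =>
  obtain hS₁ | hS₃ : S.card = 1 ∨ 3 ≤ S.card := by omega
  · obtain ⟨a, rfl⟩ := Finset.card_eq_one.1 hS₁
    obtain rfl : j = 0 := by omega
    exact hasEssentialCycle_singleton a
  by_cases hmin : 3 * j + 5 ≤ 2 * S.card
  · obtain ⟨p, q, x, T, rfl, hpq, hqx, hx, hT⟩ := exists_three_min_insert_eq hS₃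
    obtain ⟨j, rfl⟩ : ∃ i, j = i + 1 := ⟨j - 1, by omega⟩
    exact (ih _ (by omega) (by omega) (by omega) rfl).insert_three_min
      (Finset.card_pos.1 (by omega)) hpq hqx hx
  by_cases hmax : S.card + 2 ≤ 3 * j
  · obtain ⟨x, q, p, T, rfl, hp, hpq, hqx, hT⟩ := exists_three_max_insert_eq hS₃
    obtain ⟨j, rfl⟩ : ∃ i, j = i + 2 := ⟨j - 2, by omega⟩
    exact (ih _ (by omega) (by omega) (by omega) rfl).insert_three_max hp hpq hqx
  · obtain ⟨t, r, T, rfl, hr, ht, hT⟩ := exists_max_min_insert_eq (by omega : 2 ≤ S.card)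
    obtain ⟨j, rfl⟩ : ∃ i, j = i + 1 := ⟨j - 1, by omega⟩
    exact (ih _ (by omega) (by omega) (by omega) rfl).insert_max_insert_min
      (Finset.card_pos.1 (by omega)) hr ht

end Nonvanishing

/-! ### Integral coefficients -/

-- By Nakayama's lemma the annihilator of `Q` lies in no maximal ideal `(p)`.
lemma subsingleton_of_forall_prime_dvd {Q : Type*} [AddCommGroup Q] [Module.Finite ℤ Q]
    (h : ∀ p : ℕ, p.Prime → ∀ x : Q, ∃ y : Q, (p : ℤ) • y = x) : Subsingleton Q := by
  have hann (p : ℕ) (hp : p.Prime) : ∃ r ∈ Module.annihilator ℤ Q, (p : ℤ) ∣ r - 1 := by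
    obtain ⟨r, hr, hzero⟩ := Submodule.exists_sub_one_mem_and_smul_eq_zero_of_fg_of_le_smul
      (Ideal.span {(p : ℤ)}) (⊤ : Submodule ℤ Q) Module.Finite.fg_top fun x _ => by
        obtain ⟨y, rfl⟩ := h p hp x
        exact Submodule.smul_mem_smul (Ideal.mem_span_singleton_self _) trivial
    exact ⟨r, Module.mem_annihilator.2 fun x => hzero x trivial, Ideal.mem_span_singleton.1 hr⟩
  obtain ⟨g, hg⟩ := (IsPrincipalIdealRing.principal (Module.annihilator ℤ Q)).principal
  rw [← Module.annihilator_eq_top_iff (R := ℤ), hg]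
  refine Ideal.span_singleton_eq_top.2 (Int.isUnit_iff_natAbs_eq.2 ?_)
  by_contra hne
  obtain ⟨p, hp, hpg⟩ := Nat.exists_prime_and_dvd hne
  obtain ⟨r, hr, hpr⟩ := hann p hp
  rw [hg] at hr
  have hgr : g ∣ r := Ideal.mem_span_singleton.1 hr
  have hone : (p : ℤ) ∣ 1 :=
    (dvd_sub_right ((Int.natCast_dvd.2 hpg).trans hgr)).1 hpr
  exact hp.one_lt.ne' (by exact_mod_cast Int.eq_one_of_dvd_one (by positivity) hone)

section ChangeCoeff

variable {α R R' : Type*} [CommRing R] [CommRing R']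

/-- The map on block chains induced by a homomorphism of coefficient rings. -/
noncomputable def changeCoeff (f : R →+* R') : BlockChain R α →+ BlockChain R' α :=
  mapRange.addMonoidHom f

@[simp] lemma changeCoeff_single (f : R →+* R') (L : List (Finset α)) (r : R) :
    changeCoeff f (single L r) = single L (f r) := by
  simp [changeCoeff]

lemma changeCoeff_smul (f : R →+* R') (r : R) (x : BlockChain R α) :
    changeCoeff f (r • x) = f r • changeCoeff f x :=
  mapRange_smul' (hf := map_zero f) r (f r) x (by simp)

lemma changeCoeff_consBlock (f : R →+* R') (B : Finset α) (x : BlockChain R α) :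
    changeCoeff f (consBlock R B x) = consBlock R' B (changeCoeff f x) := by
  have h : (changeCoeff f).comp (consBlock R B).toAddMonoidHom =
      (consBlock R' B).toAddMonoidHom.comp (changeCoeff f) :=
    Finsupp.addHom_ext fun L r => by simp
  exact DFunLike.congr_fun h x

variable [LinearOrder α]

lemma changeCoeff_boundaryWord (f : R →+* R') (L : List (Finset α)) :
    changeCoeff f (boundaryWord R L) = boundaryWord R' L := by
  induction L with
  | nil => simp
  | cons B L ih =>
    have hmerge : changeCoeff f (mergeHeadWord R B L) = mergeHeadWord R' B L := by
      cases L <;> simp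
    rw [boundaryWord_cons, boundaryWord_cons, map_sub, changeCoeff_consBlock, ih, hmerge]

lemma changeCoeff_boundary (f : R →+* R') (x : BlockChain R α) :
    changeCoeff f (boundary R x) = boundary R' (changeCoeff f x) := by
  have h : (changeCoeff f).comp (boundary R).toAddMonoidHom =
      (boundary R').toAddMonoidHom.comp (changeCoeff (α := α) f) :=
    Finsupp.addHom_ext fun L r => by simp [changeCoeff_smul, changeCoeff_boundaryWord]
  exact DFunLike.congr_fun h x

lemma mapRange_mem_chains {f : R → R'} (hf : f 0 = 0) {S : Finset α} {k : ℕ} {x : BlockChain R α}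
    (hx : x ∈ chains R S k) : mapRange f hf x ∈ chains R' S k := by
  rw [mem_chains] at hx ⊢
  exact fun L hL => hx L fun hzero => hL (by rw [mapRange_apply, hzero, hf])

end ChangeCoeff

section Integral

variable {α : Type*} [LinearOrder α] {S : Finset α} {k : ℕ}

lemma finite_descentWords : (descentWords S k).Finite := by
  refine (List.finite_length_eq S.powerset k |>.image (List.map Subtype.val)).subset fun L hL => ?_
  have hsub (B : Finset α) (hB : B ∈ L) : B ∈ S.powerset :=
    Finset.mem_powerset.2 fun a ha => hL.2.1 ▸ mem_letters.2 ⟨B, hB, ha⟩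
  lift L to List S.powerset using hsub
  exact ⟨L, by simpa using hL.2.2, rfl⟩

lemma exists_changeCoeff_eq_of_mem_chains {m : ℕ} {x : BlockChain (ZMod m) α}
    (hx : x ∈ chains (ZMod m) S k) :
    ∃ y ∈ chains ℤ S k, changeCoeff (Int.castRingHom (ZMod m)) y = x :=
  ⟨mapRange ZMod.cast ZMod.cast_zero x, mapRange_mem_chains _ hx, by ext L; simp [changeCoeff]⟩

lemma exists_smul_eq_of_changeCoeff_eq_zero {m : ℕ} {x : BlockChain ℤ α} (hx : x ∈ chains ℤ S k)
    (hzero : changeCoeff (Int.castRingHom (ZMod m)) x = 0) :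
    ∃ y ∈ chains ℤ S k, (m : ℤ) • y = x := by
  refine ⟨mapRange (· / (m : ℤ)) (Int.zero_ediv _) x, mapRange_mem_chains _ hx, ?_⟩
  ext L
  have hdvd : (m : ℤ) ∣ x L :=
    (ZMod.intCast_zmod_eq_zero_iff_dvd _ _).1 (DFunLike.congr_fun hzero L)
  simpa using Int.mul_ediv_cancel' hdvd

lemma exists_eq_smul_add_boundary {m : ℕ} (hm : m ≠ 0) (hexact : ExactAt (ZMod m) S k)
    {c : BlockChain ℤ α} (hc : c ∈ chains ℤ S k) (hcycle : boundary ℤ c = 0) :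
    ∃ c' ∈ chains ℤ S k, boundary ℤ c' = 0 ∧
      ∃ e ∈ chains ℤ S (k + 1), (m : ℤ) • c' + boundary ℤ e = c := by
  set f := Int.castRingHom (ZMod m)
  obtain ⟨e', he', hbd⟩ := hexact (changeCoeff f c) (mapRange_mem_chains (map_zero f) hc)
    (by rw [← changeCoeff_boundary, hcycle, map_zero])
  obtain ⟨e, he, rfl⟩ := exists_changeCoeff_eq_of_mem_chains he'
  have hred : changeCoeff f (c - boundary ℤ e) = 0 := by
    rw [map_sub, changeCoeff_boundary, hbd, sub_self]
  obtain ⟨c', hc', hsmul⟩ :=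
    exists_smul_eq_of_changeCoeff_eq_zero (sub_mem hc (boundary_mem_chains he)) hred
  refine ⟨c', hc', ?_, e, he, by rw [hsmul, sub_add_cancel]⟩
  have hzero : (m : ℤ) • boundary ℤ c' = 0 := by
    rw [← map_smul, hsmul, map_sub, hcycle, boundary_boundary, sub_zero]
  exact (smul_eq_zero.1 hzero).resolve_left (by exact_mod_cast hm)

theorem exactAt_int_of_forall_prime (h : ∀ p : ℕ, p.Prime → ExactAt (ZMod p) S k) :
    ExactAt ℤ S k := by
  let Z : Submodule ℤ (BlockChain ℤ α) := LinearMap.ker (boundary ℤ) ⊓ chains ℤ S k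
  let B : Submodule ℤ Z := ((chains ℤ S (k + 1)).map (boundary ℤ)).comap Z.subtype
  have : Finite (descentWords S k) := finite_descentWords
  have : IsNoetherian ℤ (chains ℤ S k) :=
    isNoetherian_of_linearEquiv (supportedEquivFinsupp (M := ℤ) (R := ℤ) (descentWords S k)).symm
  have : Module.Finite ℤ Z :=
    Module.Finite.of_injective (Submodule.inclusion (inf_le_right : Z ≤ chains ℤ S k))
      (Submodule.inclusion_injective _)
  have hdiv (p : ℕ) (hp : p.Prime) (x : Z ⧸ B) : ∃ y : Z ⧸ B, (p : ℤ) • y = x := by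
    obtain ⟨⟨c, hcycle, hc⟩, rfl⟩ := B.mkQ_surjective x
    obtain ⟨c', hc', hcycle', e, he, hsum⟩ :=
      exists_eq_smul_add_boundary hp.ne_zero (h p hp) hc hcycle
    refine ⟨B.mkQ ⟨c', hcycle', hc'⟩, ?_⟩
    rw [← map_smul, eq_comm, ← sub_eq_zero, ← map_sub, Submodule.mkQ_apply,
      Submodule.Quotient.mk_eq_zero]
    exact ⟨e, he, by simp [← hsum]⟩
  have hB : B = ⊤ :=
    Submodule.Quotient.subsingleton_iff.1 (subsingleton_of_forall_prime_dvd hdiv)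
  intro c hc hcycle
  have hmem : (⟨c, hcycle, hc⟩ : Z) ∈ B := hB ▸ Submodule.mem_top
  exact hmem

theorem exactAt_int (hS : S.Nonempty) (hk : 3 * k ≤ S.card + 1 ∨ 2 * S.card + 2 ≤ 3 * k) :
    ExactAt ℤ S k :=
  exactAt_int_of_forall_prime fun p hp => by
    have : Fact p.Prime := ⟨hp⟩
    exact hk.elim (exactAt_of_three_mul_le hS) exactAt_of_two_mul_add_two_le

end Integral

/-! ### From flags to words -/

section Differences

variable {α : Type*} [DecidableEq α]

/-- The list `X₁ \ U, X₂ \ X₁, X₃ \ X₂, …` of successive differences. -/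
def differences : Finset α → List (Finset α) → List (Finset α)
  | _, [] => []
  | U, S :: X => (S \ U) :: differences S X

lemma length_differences (U : Finset α) (X : List (Finset α)) :
    (differences U X).length = X.length := by
  induction X generalizing U with
  | nil => rfl
  | cons S X ih => simp [differences, ih]

lemma getElem_differences (U : Finset α) (X : List (Finset α)) (i : ℕ)
    (hi : i < (differences U X).length) :
    (differences U X)[i] =
      X[i]'(length_differences U X ▸ hi) \
        (U :: X)[i]'(Nat.lt_succ_of_lt (length_differences U X ▸ hi)) := by
  induction X generalizing U i with
  | nil => simp [differences] at hi
  | cons S X ih =>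
    cases i with
    | zero => rfl
    | succ i => exact ih S i (by simpa [differences] using hi)

lemma differences_injOn (U : Finset α) :
    Set.InjOn (differences U) {X | (U :: X).IsChain (· ⊂ ·)} := by
  intro X hX Y hY h
  induction X generalizing U Y with
  | nil => cases Y <;> simp_all [differences]
  | cons S X ih =>
    cases Y with
    | nil => simp [differences] at h
    | cons S' Y =>
      simp only [Set.mem_ofPred_eq, List.isChain_cons_cons] at hX hY
      simp only [differences, List.cons.injEq] at h
      obtain rfl : S = S' := by
        rw [← Finset.sdiff_union_of_subset hX.1.1, h.1, Finset.sdiff_union_of_subset hY.1.1]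
      rw [ih S hX.2 hY.2 h.2]

end Differences

section DifferenceWords

variable {α : Type*} [LinearOrder α] {U S T : Finset α} {X : List (Finset α)}

lemma letters_differences {L : List (Finset α)} (h : (U :: (L ++ [T])).IsChain (· ⊆ ·)) :
    letters (differences U (L ++ [T])) = T \ U := by
  induction L generalizing U with
  | nil => simp [differences]
  | cons S L ih =>
    rw [List.cons_append, List.isChain_cons_cons] at h
    have hST : S ⊆ T := List.rel_of_pairwise_cons h.2.pairwise (by simp)
    rw [List.cons_append, differences, letters_cons, ih h.2, Finset.union_comm,
      Finset.sdiff_union_sdiff_cancel hST h.1]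

lemma disjoint_of_mem_differences (h : (U :: X).IsChain (· ⊆ ·)) :
    ∀ B ∈ differences U X, Disjoint U B := by
  induction X generalizing U with
  | nil => simp [differences]
  | cons S X ih =>
    rw [List.isChain_cons_cons] at h
    rw [differences, List.forall_mem_cons]
    exact ⟨Finset.disjoint_sdiff, fun B hB => (ih h.2 B hB).mono_left h.1⟩

lemma isDescentWord_differences (h : (U :: X).IsChain (· ⊂ ·)) :
    IsDescentWord (differences U X) ↔ (differences U X).IsChain Descends := by
  refine ⟨IsDescentWord.descends, fun hdesc => ⟨?_, ?_, hdesc⟩⟩ <;> clear hdesc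
  · induction X generalizing U with
    | nil => simp [differences]
    | cons S X ih =>
      rw [List.isChain_cons_cons] at h
      rw [differences, List.forall_mem_cons]
      exact ⟨Finset.sdiff_nonempty.2 h.1.2, ih h.2⟩
  · induction X generalizing U with
    | nil => simp [differences]
    | cons S X ih =>
      rw [List.isChain_cons_cons] at h
      have hsub : (S :: X).IsChain (· ⊆ ·) := h.2.imp fun _ _ hss => hss.1
      rw [differences, List.pairwise_cons]
      exact ⟨fun B hB => (disjoint_of_mem_differences hsub B hB).mono_left Finset.sdiff_subset,
        ih h.2⟩

lemma IsDescentWord.exists_differences_eq (hX : IsDescentWord X) (hne : X ≠ [])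
    (hU : Disjoint U (letters X)) (hT : U ∪ letters X = T) :
    ∃ L, (U :: (L ++ [T])).IsChain (· ⊂ ·) ∧ differences U (L ++ [T]) = X := by
  induction X generalizing U with
  | nil => exact absurd rfl hne
  | cons B X ih =>
    obtain ⟨hB, hBX, -, hX⟩ := isDescentWord_cons.1 hX
    rw [letters_cons, Finset.disjoint_union_right] at hU
    rw [letters_cons, ← Finset.union_assoc] at hT
    have hss : U ⊂ U ∪ B := by
      refine Finset.ssubset_iff_subset_ne.2 ⟨Finset.subset_union_left, fun h => hB.ne_empty ?_⟩
      exact Finset.disjoint_self_iff_empty B |>.1 (hU.1.mono_left (Finset.union_eq_left.1 h.symm))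
    have hdiff : (U ∪ B) \ U = B := Finset.union_sdiff_cancel_left hU.1
    rcases eq_or_ne X [] with rfl | hXne
    · rw [letters_nil, Finset.union_empty] at hT
      exact ⟨[], by simpa [← hT] using hss, by simp [differences, ← hT, hdiff]⟩
    · obtain ⟨L, hchain, hL⟩ := ih hX hXne (Finset.disjoint_union_left.2 ⟨hU.2, hBX⟩) hT
      exact ⟨(U ∪ B) :: L, List.isChain_cons_cons.2 ⟨hss, hchain⟩, by
        rw [List.cons_append, differences, hdiff, hL]⟩

lemma sdiff_union_sdiff_of_isChain {S' : Finset α} (h : (U :: S :: S' :: X).IsChain (· ⊆ ·)) :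
    S \ U ∪ S' \ S = S' \ U := by
  simp only [List.isChain_cons_cons] at h
  rw [Finset.union_comm, Finset.sdiff_union_sdiff_cancel h.2.1 h.1]

lemma merges_differences_eraseIdx (h : (U :: S :: X).IsChain (· ⊆ ·)) {i : ℕ}
    (hi : i < X.length) :
    Merges (differences U (S :: X)) (differences U ((S :: X).eraseIdx i)) := by
  induction X generalizing U S i with
  | nil => simp at hi
  | cons S' X ih =>
    have hmerge := sdiff_union_sdiff_of_isChain h
    cases i with
    | zero =>
      have hhead := Merges.head (S \ U) (S' \ S) (differences S' X)
      rwa [hmerge] at hhead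
    | succ i => exact .cons _ (ih h.tail (by simpa using hi))

lemma boundaryWord_differences {R : Type*} [CommRing R] (h : (U :: S :: X).IsChain (· ⊆ ·)) :
    boundaryWord R (differences U (S :: X)) =
      ∑ i ∈ Finset.range X.length, single (differences U ((S :: X).eraseIdx i)) ((-1) ^ i) := by
  induction X generalizing U S with
  | nil => simp [differences]
  | cons S' X ih =>
    have hmerge := sdiff_union_sdiff_of_isChain h
    rw [List.length_cons, Finset.sum_range_succ', differences, boundaryWord_cons, ih h.tail,
      differences, mergeHeadWord_cons, hmerge, sub_eq_neg_add, map_sum, ← Finset.sum_neg_distrib]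
    simp [differences, pow_succ]

end DifferenceWords

section Transfer

variable {n : ℕ}

/-- The word that encodes a flag of subsets of `Fin n`: its successive differences, the last one
being the complement of the largest member. -/
def flagWord (L : List (Finset (Fin n))) : List (Finset (Fin n)) :=
  differences ∅ (L ++ [Finset.univ])

lemma length_flagWord (L : List (Finset (Fin n))) : (flagWord L).length = L.length + 1 := by
  simp [flagWord, length_differences]

lemma isFace_iff {L : List (Finset (Fin n))} :
    IsFace n L ↔
      ((∅ : Finset (Fin n)) :: (L ++ [Finset.univ])).IsChain (· ⊂ ·) ∧
        IsDescentWord (flagWord L) := by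
  refine and_congr_right fun hchain => ?_
  replace hchain : ((∅ : Finset (Fin n)) :: (L ++ [Finset.univ])).IsChain (· ⊂ ·) := hchain
  rw [flagWord, isDescentWord_differences hchain, List.isChain_iff_getElem]
  simp only [getElem_differences, length_differences]
  exact ⟨fun h i hi => h i (by simpa [withSent] using hi),
    fun h i hi => h i (by simpa [withSent] using hi)⟩

lemma flagWord_mem_descentWords {L : List (Finset (Fin n))} (h : IsFace n L) :
    flagWord L ∈ descentWords Finset.univ (L.length + 1) := by
  obtain ⟨hchain, hword⟩ := isFace_iff.1 h
  refine ⟨hword, ?_, length_flagWord L⟩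
  rw [flagWord, letters_differences (hchain.imp fun _ _ hss => hss.1), Finset.sdiff_empty]

lemma flagWord_injOn : Set.InjOn (flagWord (n := n)) {L | IsFace n L} := fun _ hL _ hL' h =>
  List.append_cancel_right (differences_injOn ∅ (isFace_iff.1 hL).1 (isFace_iff.1 hL').1 h)

lemma exists_isFace_flagWord_eq {X : List (Finset (Fin n))} (hX : IsDescentWord X) (hne : X ≠ [])
    (hletters : letters X = Finset.univ) : ∃ L, IsFace n L ∧ flagWord L = X := by
  obtain ⟨L, hchain, rfl⟩ := hX.exists_differences_eq hne (Finset.disjoint_empty_left _)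
    ((Finset.empty_union _).trans hletters)
  exact ⟨L, isFace_iff.2 ⟨hchain, hX⟩, rfl⟩

lemma merges_flagWord_eraseIdx {L : List (Finset (Fin n))} (h : IsFace n L) {i : ℕ}
    (hi : i < L.length) : Merges (flagWord L) (flagWord (L.eraseIdx i)) := by
  cases L with
  | nil => simp at hi
  | cons S L =>
    have hmerges := merges_differences_eraseIdx (X := L ++ [Finset.univ]) (i := i)
      ((isFace_iff.1 h).1.imp fun _ _ hss => hss.1) (by simpa using hi)
    rwa [← List.cons_append, List.eraseIdx_append_of_lt_length hi] at hmerges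

lemma isFace_eraseIdx {L : List (Finset (Fin n))} (h : IsFace n L) {i : ℕ} (hi : i < L.length) :
    IsFace n (L.eraseIdx i) := by
  obtain ⟨hchain, hword⟩ := isFace_iff.1 h
  refine isFace_iff.2 ⟨?_, (merges_flagWord_eraseIdx h hi).isDescentWord hword⟩
  exact hchain.sublist (((List.eraseIdx_sublist L i).append_right _).cons_cons _)

lemma boundaryWord_flagWord {L : List (Finset (Fin n))} (h : IsFace n L) :
    boundaryWord ℤ (flagWord L) =
      ∑ i ∈ Finset.range L.length, single (flagWord (L.eraseIdx i)) ((-1) ^ i) := by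
  cases L with
  | nil => simp [flagWord, differences]
  | cons S L =>
    have hbd := boundaryWord_differences (X := L ++ [Finset.univ]) (R := ℤ)
      ((isFace_iff.1 h).1.imp fun _ _ hss => hss.1)
    rw [List.length_append, List.length_singleton] at hbd
    refine hbd.trans (Finset.sum_congr rfl fun i hi => ?_)
    rw [flagWord, ← List.cons_append, List.eraseIdx_append_of_lt_length (by simpa using hi)]

/-- The chain map from the simplicial chains of the h-complex to block chains. -/
noncomputable def flagChain (n k : ℕ) : (HFace n k →₀ ℤ) →ₗ[ℤ] BlockChain ℤ (Fin n) :=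
  lmapDomain ℤ ℤ fun L => flagWord L.1

@[simp] lemma flagChain_single {k : ℕ} (L : HFace n k) (r : ℤ) :
    flagChain n k (single L r) = single (flagWord L.1) r := by
  simp [flagChain]

lemma flagChain_injective (n k : ℕ) : Function.Injective (flagChain n k) :=
  mapDomain_injective fun L L' h => Subtype.ext (flagWord_injOn L.2.1 L'.2.1 h)

lemma range_flagChain (n k : ℕ) :
    LinearMap.range (flagChain n k) = chains ℤ Finset.univ (k + 1) := by
  have hwords : Set.range (fun L : HFace n k => flagWord L.1) =
      descentWords Finset.univ (k + 1) := by
    refine Set.Subset.antisymm ?_ fun X ⟨hX, hletters, hlen⟩ => ?_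
    · rintro _ ⟨⟨L, hface, rfl⟩, rfl⟩
      exact flagWord_mem_descentWords hface
    · obtain ⟨L, hface, rfl⟩ :=
        exists_isFace_flagWord_eq hX (List.ne_nil_of_length_eq_add_one hlen) hletters
      exact ⟨⟨L, hface, by simpa [length_flagWord] using hlen⟩, rfl⟩
  rw [flagChain, LinearMap.range_eq_map, ← supported_univ, lmapDomain_supported, Set.image_univ,
    hwords]

lemma flagChain_bdryElem {k : ℕ} (L : HFace n (k + 1)) :
    flagChain n k (bdryElem n k L) = boundaryWord ℤ (flagWord L.1) := by
  rw [boundaryWord_flagWord L.2.1, L.2.2, bdryElem, map_sum, Finset.sum_range]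
  refine Finset.sum_congr rfl fun i _ => ?_
  have hi : (i : ℕ) < L.1.length := i.2.trans_eq L.2.2.symm
  rw [dif_pos ⟨isFace_eraseIdx L.2.1 hi, by rw [List.length_eraseIdx_of_lt hi, L.2.2]; rfl⟩]
  exact flagChain_single _ _

lemma flagChain_bdry {k : ℕ} (x : HFace n (k + 1) →₀ ℤ) :
    flagChain n k (bdry n k x) = boundary ℤ (flagChain n (k + 1) x) :=
  eq_of_eq_on_single (f := flagChain n k ∘ₗ bdry n k) (g := boundary ℤ ∘ₗ flagChain n (k + 1))
    (fun L => by simp [bdry, flagChain_bdryElem]) x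

theorem nontrivial_reducedHomology_iff {i : ℕ} :
    Nontrivial (ReducedHomology n i) ↔ ¬ ExactAt ℤ (Finset.univ : Finset (Fin n)) (i + 2) := by
  rw [← not_subsingleton_iff_nontrivial, not_iff_not, ReducedHomology,
    Submodule.Quotient.subsingleton_iff, Submodule.eq_top_iff', ExactAt, ← range_flagChain,
    ← range_flagChain]
  constructor
  · rintro h _ ⟨x, rfl⟩ hcycle
    have hx : bdry n i x = 0 :=
      flagChain_injective n i (by rw [flagChain_bdry, hcycle, map_zero])
    obtain ⟨y, hy⟩ := h ⟨x, hx⟩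
    exact ⟨_, ⟨y, rfl⟩, by rw [← flagChain_bdry, hy, Submodule.subtype_apply]⟩
  · rintro h ⟨x, hx⟩
    obtain ⟨_, ⟨y, rfl⟩, hy⟩ := h (flagChain n (i + 1) x) ⟨x, rfl⟩
      (by rw [← flagChain_bdry, LinearMap.mem_ker.1 hx, map_zero])
    exact ⟨y, flagChain_injective n (i + 1) (by rw [flagChain_bdry, hy, Submodule.subtype_apply])⟩

end Transfer

end EdelmanReiner

/-- Edelman–Reiner conjecture: for `i ≥ 0` and `n ≥ 2`, the
reduced homology `H̃ᵢ(Δₙ; ℤ)` is nonzero if and only if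
`(3i+5)/2 ≤ n ≤ 3i+4` (the inequalities `3i+5 ≤ 2n` and `n ≤ 3i+4`),
equivalently `(n-4)/3 ≤ i ≤ (2n-5)/3`. -/
theorem edelman_reiner_conjecture (n i : ℕ) (hn : 2 ≤ n) :
    Nontrivial (ReducedHomology n i) ↔ (3 * i + 5 ≤ 2 * n ∧ n ≤ 3 * i + 4) := by
  have hcard : (Finset.univ : Finset (Fin n)).card = n := Finset.card_fin n
  rw [EdelmanReiner.nontrivial_reducedHomology_iff]
  constructor
  · intro hexact
    by_contra hrange
    exact hexact (EdelmanReiner.exactAt_int (Finset.card_pos.1 (by omega)) (by omega))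
  · rintro ⟨hlow, hhigh⟩
    exact (EdelmanReiner.hasEssentialCycle_of_le (by omega) (by omega)).not_exactAt
end
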